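/- arXiv:1905.06459 — 2 statements merged into one kernel-verified Lean document; each statement's English description precedes it below -/
import Mathlib

section
/- Every covering 3-hypergraph with at least two edges is eulerian. -/
/-- A closed walk of length `k` in a hypergraph on vertex type `V` whose edges are
finite sets of vertices: an alternating sequence of vertices and edges such that
consecutive vertices are distinct and both lie in the interposed edge, and the
first vertex equals the last. -/
def IsClosedWalk {V : Type} (k : ℕ) (v : Fin (k + 1) → V) (e : Fin k → Finset V) : Prop :=
  v 0 = v (Fin.last k) ∧
    ∀ i : Fin k, v i.castSucc ≠ v i.succ ∧ v i.castSucc ∈ e i ∧ v i.succ ∈ e i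

/-- The multiset of edges traversed by a walk (with multiplicity). -/
def walkEdges {V : Type} {k : ℕ} (e : Fin k → Finset V) : Multiset (Finset V) :=
  Multiset.ofList (List.ofFn e)

/-- A hypergraph, given by its edge multiset `E` over vertex type `V`, is eulerian if it
admits a closed walk whose multiset of traversed edges is exactly `E`, i.e. a closed
strict trail traversing every edge exactly once (a trivial walk works iff `E = 0`,
matching the convention that a trivial walk is an Euler tour of an edgeless
hypergraph). -/
def IsEulerian {V : Type} (E : Multiset (Finset V)) : Prop :=
  ∃ (k : ℕ) (v : Fin (k + 1) → V) (e : Fin k → Finset V),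
    IsClosedWalk k v e ∧ walkEdges e = E

/-- An `l`-covering `k`-hypergraph on vertex type `V`: a nonempty `k`-uniform edge
multiset such that every `l`-element subset of the vertex set is contained in at
least one edge. -/
def IsCoveringHypergraph {V : Type} [DecidableEq V] (E : Multiset (Finset V))
    (l k : ℕ) : Prop :=
  E ≠ 0 ∧ (∀ f ∈ E, f.card = k) ∧
    ∀ s : Finset V, s.card = l → ∃ f ∈ E, s ⊆ f

/-!
Choose a vertex to omit from each triple. The remaining pairs form a graph, and an Euler tour of it
is an Euler tour of the triples, so it suffices to make this graph even and connected on its edges.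

If the graph is merely connected, then re-choosing one vertex from each remaining pair realises any
prescribed degree parities of the right sum (over `ZMod 2`, the map sending a colouring to the pairs
it cuts has only the constants as its kernel), and so an even omission exists.

Among all even omissions, take one with a component `D` having as many edges as possible. Exchanging
omitted vertices around a short cycle of triples preserves all parities, and an even graph has no
bridge, so altering a single edge of `D` never disconnects it. A triple outside `D` could thus be
attached to `D` by an exchange around a cycle of length at most four, against maximality.
-/

namespace TripleCover

section Linked

variable {V ι : Type*}

/-- The 2-colouring `χ` does not cut the edge `e`. -/
def Uncut (χ : V → ZMod 2) (e : Finset V) : Prop :=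
  ∀ p ∈ e, ∀ q ∈ e, χ p = χ q

/-- `x` and `y` are connected through the edges `K i`. The encoding is by cuts: no 2-colouring
separates `x` from `y` without cutting an edge. -/
def Linked (K : ι → Finset V) (x y : V) : Prop :=
  ∀ χ : V → ZMod 2, (∀ i, Uncut χ (K i)) → χ x = χ y

/-- The vertex set of the connected component of `a`. -/
def component (K : ι → Finset V) (a : V) : Set V :=
  {v | Linked K a v}

/-- The indices of the edges of the connected component of `a`. -/
def componentEdges (K : ι → Finset V) (a : V) : Set ι :=
  {i | ↑(K i) ⊆ component K a}

theorem exists_mem_ne_of_card_eq_two {e : Finset V} (he : e.card = 2) (p : V) :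
    ∃ q ∈ e, q ≠ p :=
  Finset.exists_mem_ne (by simp [he]) p

theorem pair_eq_of_mem [DecidableEq V] {e : Finset V} (he : e.card = 2) {p q : V} (hp : p ∈ e)
    (hq : q ∈ e) (hpq : p ≠ q) : {p, q} = e :=
  Finset.eq_of_subset_of_card_le (by grind) (by rw [he, Finset.card_pair hpq])

theorem sum_eq_zero_iff_uncut {e : Finset V} (he : e.card = 2) (χ : V → ZMod 2) :
    ∑ v ∈ e, χ v = 0 ↔ Uncut χ e := by
  classical
  obtain ⟨p, q, hpq, rfl⟩ := Finset.card_eq_two.1 he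
  rw [Finset.sum_pair hpq, CharTwo.add_eq_zero]
  grind [Uncut]

variable {K : ι → Finset V} {a b x y z : V}

theorem Uncut.mono {χ : V → ZMod 2} {e f : Finset V} (h : Uncut χ f) (hef : e ⊆ f) : Uncut χ e :=
  fun p hp q hq => h p (hef hp) q (hef hq)

theorem Linked.refl (K : ι → Finset V) (x : V) : Linked K x x :=
  fun _ _ => rfl

theorem Linked.symm (h : Linked K x y) : Linked K y x :=
  fun χ hχ => (h χ hχ).symm

theorem Linked.trans (hxy : Linked K x y) (hyz : Linked K y z) : Linked K x z :=
  fun χ hχ => (hxy χ hχ).trans (hyz χ hχ)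

theorem Linked.mono {K' : ι → Finset V} (h : Linked K x y) (hK : ∀ i, K i ⊆ K' i) :
    Linked K' x y :=
  fun χ hχ => h χ fun i => (hχ i).mono (hK i)

theorem linked_of_mem {i : ι} (hx : x ∈ K i) (hy : y ∈ K i) : Linked K x y :=
  fun _ hχ => hχ i x hx y hy

theorem Linked.exists_mem_notMem (h : Linked K x y) {A : Set V} (hx : x ∈ A) (hy : y ∉ A) :
    ∃ i, ∃ p ∈ K i, ∃ q ∈ K i, p ∈ A ∧ q ∉ A := by
  classical
  by_contra! hA
  have hχ := h (A.indicator 1) fun i p hp q hq => by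
    have : p ∈ A ↔ q ∈ A := ⟨hA i p hp q hq, hA i q hq p hp⟩
    simp [Set.indicator_apply, this]
  simp [hx, hy] at hχ

theorem Linked.eq_of_uncut (h : Linked K x y) {χ : V → ZMod 2}
    (hχ : ∀ i, ∀ p ∈ K i, Linked K x p → Uncut χ (K i)) : χ x = χ y := by
  by_contra hne
  obtain ⟨i, p, hp, q, hq, ⟨hxp, hχp⟩, hqA⟩ :=
    h.exists_mem_notMem (A := {v | Linked K x v ∧ χ v = χ x}) ⟨.refl K x, rfl⟩
      fun hy => hne hy.2.symm
  exact hqA ⟨hxp.trans (linked_of_mem hp hq), (hχ i p hp hxp q hq p hp).trans hχp⟩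

theorem mem_componentEdges_of_mem {i : ι} {p : V} (hp : p ∈ K i) (hap : Linked K a p) :
    i ∈ componentEdges K a :=
  fun _ hq => hap.trans (linked_of_mem hp hq)

section NonCut

variable [DecidableEq V]

/-- Deleting `b` does not disconnect its component. -/
def IsNonCut (K : ι → Finset V) (b : V) : Prop :=
  ∀ x y, Linked K b x → Linked K b y → x ≠ b → y ≠ b → Linked (fun i => (K i).erase b) x y

theorem not_linked_erase_self (hab : a ≠ b) : ¬ Linked (fun i => (K i).erase b) a b := by
  intro h
  obtain ⟨i, p, hp, -, -, rfl, -⟩ :=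
    h.symm.exists_mem_notMem (A := {b}) (Set.mem_singleton b) (Set.mem_singleton_iff.not.2 hab)
  exact Finset.notMem_erase p (K i) hp

theorem Linked.erase_of_not_linked_erase (hxb : ¬ Linked (fun i => (K i).erase b) a x)
    (h : Linked (fun i => (K i).erase b) a y) : Linked (fun i => (K i).erase x) a y := by
  intro χ hχ
  refine h.eq_of_uncut fun i p hp hap => (hχ i).mono fun q hq => ?_
  refine Finset.mem_erase.2 ⟨?_, Finset.mem_of_mem_erase hq⟩
  rintro rfl
  exact hxb (hap.trans (linked_of_mem hp hq))

theorem linked_erase_deleted (hab : a ≠ b) (hax : Linked K a x) (hxb : x ≠ b)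
    (hx : ¬ Linked (fun i => (K i).erase b) a x) : Linked (fun i => (K i).erase x) a b := by
  obtain ⟨i, p, hp, q, hq, hap, haq⟩ :=
    hax.exists_mem_notMem (A := component (fun i => (K i).erase b) a) (Linked.refl _ a) hx
  have hpb : p ≠ b := fun e => not_linked_erase_self hab (e ▸ hap)
  have hpx : p ≠ x := fun e => hx (e ▸ hap)
  obtain rfl : q = b := by
    by_contra hqb
    exact haq (hap.trans (linked_of_mem (i := i) (Finset.mem_erase.2 ⟨hpb, hp⟩)
      (Finset.mem_erase.2 ⟨hqb, hq⟩)))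
  exact (hap.erase_of_not_linked_erase hx).trans (linked_of_mem (i := i)
    (Finset.mem_erase.2 ⟨hpx, hp⟩) (Finset.mem_erase.2 ⟨hxb.symm, hq⟩))

variable [Finite V]

theorem exists_linked_erase (hx : Linked K a x) (hxa : x ≠ a) :
    ∃ b ≠ a, Linked K a b ∧ ∀ y, Linked K a y → y ≠ b → Linked (fun i => (K i).erase b) a y := by
  obtain ⟨b, ⟨hab, hba⟩, hmax⟩ := Set.exists_max_image {b | Linked K a b ∧ b ≠ a}
    (fun b => (component (fun i => (K i).erase b) a).ncard) (Set.toFinite _) ⟨x, hx, hxa⟩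
  refine ⟨b, hba, hab, fun y hy hyb => ?_⟩
  by_contra hny
  have hya : y ≠ a := by
    rintro rfl
    exact hny (.refl _ y)
  refine (hmax y ⟨hy, hya⟩).not_gt (Set.ncard_lt_ncard (Set.ssubset_iff_insert.2
    ⟨b, not_linked_erase_self hba.symm, Set.insert_subset ?_ ?_⟩) (Set.toFinite _))
  · exact linked_erase_deleted hba.symm hy hyb hny
  · exact fun z hz => hz.erase_of_not_linked_erase hny

theorem exists_isNonCut_ne (hx : Linked K a x) (hxa : x ≠ a) :
    ∃ b ≠ a, Linked K a b ∧ IsNonCut K b := by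
  obtain ⟨b, hba, hab, hb⟩ := exists_linked_erase hx hxa
  exact ⟨b, hba, hab, fun x y hx hy hxb hyb =>
    (hb x (hab.trans hx) hxb).symm.trans (hb y (hab.trans hy) hyb)⟩

theorem exists_isNonCut (K : ι → Finset V) (a : V) : ∃ b, Linked K a b ∧ IsNonCut K b := by
  by_cases ha : ∃ x, Linked K a x ∧ x ≠ a
  · obtain ⟨x, hx, hxa⟩ := ha
    obtain ⟨b, -, hb⟩ := exists_isNonCut_ne hx hxa
    exact ⟨b, hb⟩
  · push Not at ha
    exact ⟨a, .refl K a, fun x _ hx _ hxa => absurd (ha x hx) hxa⟩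

end NonCut

end Linked

section EvenFamily

variable {V ι : Type*} [Fintype ι] {K : ι → Finset V}

/-- Every vertex lies in an even number of the edges `K i`. The encoding is by colourings: every
colouring `χ` sums to zero over all incidences; the vertex `v` is the case `χ = Pi.single v 1`. -/
def IsEvenFamily (K : ι → Finset V) : Prop :=
  ∀ χ : V → ZMod 2, ∑ i, ∑ v ∈ K i, χ v = 0

theorem IsEvenFamily.exists_ne_mem (hK : IsEvenFamily K) {i : ι} {u : V} (hu : u ∈ K i) :
    ∃ j ≠ i, u ∈ K j := by
  classical
  by_contra! hj
  have hsum := hK (Pi.single u 1)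
  rw [Finset.sum_eq_single i (fun j _ hji => by simp [hj j hji]) (by simp)] at hsum
  simp [hu] at hsum

theorem IsEvenFamily.uncut_of_forall_ne (hK : IsEvenFamily K) (hcard : ∀ i, (K i).card = 2)
    {a : V} {g : ι} (hg : g ∈ componentEdges K a) {χ : V → ZMod 2}
    (hχ : ∀ i ∈ componentEdges K a, i ≠ g → Uncut χ (K i)) : Uncut χ (K g) := by
  classical
  have hsum := hK ((component K a).indicator χ)
  have hin : ∀ i ∈ componentEdges K a,
      ∑ v ∈ K i, (component K a).indicator χ v = ∑ v ∈ K i, χ v := fun i hi =>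
    Finset.sum_congr rfl fun v hv => Set.indicator_of_mem (hi hv) χ
  have hout : ∀ i ∉ componentEdges K a, ∑ v ∈ K i, (component K a).indicator χ v = 0 :=
    fun i hi => Finset.sum_eq_zero fun v hv =>
      Set.indicator_of_notMem (fun hav => hi (mem_componentEdges_of_mem hv hav)) χ
  rw [Finset.sum_eq_single g _ (by simp), hin g hg] at hsum
  · exact (sum_eq_zero_iff_uncut (hcard g) χ).1 hsum
  · intro i _ hig
    by_cases hi : i ∈ componentEdges K a
    · rw [hin i hi, sum_eq_zero_iff_uncut (hcard i)]
      exact hχ i hi hig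
    · exact hout i hi

end EvenFamily

section Trails

variable {V ι : Type*}

/-- `IsWalk K u L w`: the edges with indices listed in `L` are traversed, in this order, by a walk
from `u` to `w`. -/
inductive IsWalk (K : ι → Finset V) : V → List ι → V → Prop
  | nil (u : V) : IsWalk K u [] u
  | cons {u m w : V} {i : ι} {L : List ι} (hu : u ∈ K i) (hm : m ∈ K i) (hum : u ≠ m)
      (hL : IsWalk K m L w) : IsWalk K u (i :: L) w

variable {K : ι → Finset V} {u w : V} {L : List ι}

theorem IsWalk.append {m : V} {M : List ι} (hL : IsWalk K u L m) (hM : IsWalk K m M w) :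
    IsWalk K u (L ++ M) w := by
  induction hL with
  | nil => exact hM
  | cons hu hm hum _ ih => exact .cons hu hm hum (ih hM)

theorem IsWalk.exists_of_append {M : List ι} (h : IsWalk K u (L ++ M) w) :
    ∃ m, IsWalk K u L m ∧ IsWalk K m M w := by
  induction L generalizing u with
  | nil => exact ⟨u, .nil u, h⟩
  | cons i L ih =>
    cases h with
    | cons hu hm hum h =>
      obtain ⟨m, hL, hM⟩ := ih h
      exact ⟨m, .cons hu hm hum hL, hM⟩

theorem IsWalk.mono {T : ι → Finset V} (h : IsWalk K u L w) (hKT : ∀ i, K i ⊆ T i) :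
    IsWalk T u L w := by
  induction h with
  | nil u => exact .nil u
  | cons hu hm hum _ ih => exact .cons (hKT _ hu) (hKT _ hm) hum ih

theorem IsWalk.exists_concat (hcard : ∀ i, (K i).card = 2) (h : IsWalk K u L w) {i : ι}
    (hi : w ∈ K i) : ∃ m, IsWalk K u (L ++ [i]) m := by
  obtain ⟨m, hm, hmw⟩ := exists_mem_ne_of_card_eq_two (hcard i) w
  exact ⟨m, h.append (.cons hi hm hmw.symm (.nil m))⟩

theorem IsWalk.sum_eq (hcard : ∀ i, (K i).card = 2) (h : IsWalk K u L w) (χ : V → ZMod 2) :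
    (L.map fun i => ∑ v ∈ K i, χ v).sum = χ u + χ w := by
  classical
  induction h with
  | nil u => simp [CharTwo.add_self_eq_zero]
  | @cons u m w i L hu hm hum _ ih =>
    rw [List.map_cons, List.sum_cons, ih, ← pair_eq_of_mem (hcard i) hu hm hum, Finset.sum_pair hum]
    linear_combination CharTwo.add_self_eq_zero (χ m)

theorem IsWalk.exists_perm_of_mem (hcard : ∀ i, (K i).card = 2) (h : IsWalk K u L u) {i : ι}
    (hi : i ∈ L) {p : V} (hp : p ∈ K i) : ∃ M, M.Perm L ∧ IsWalk K p M p := by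
  classical
  obtain ⟨L₁, L₂, rfl⟩ := List.append_of_mem hi
  obtain ⟨m, h₁, h₂⟩ := h.exists_of_append
  cases h₂ with
  | @cons _ m' _ _ _ hm hm' hne h₂ =>
    obtain rfl | rfl : p = m ∨ p = m' := by
      simpa [← pair_eq_of_mem (hcard i) hm hm' hne] using hp
    · exact ⟨i :: L₂ ++ L₁, List.perm_append_comm, (IsWalk.cons hm hm' hne h₂).append h₁⟩
    · exact ⟨L₂ ++ (L₁ ++ [i]), by grind [List.perm_append_comm],
        h₂.append (h₁.append (.cons hm hm' hne (.nil p)))⟩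

/-- `L` lists the edges of a trail from `u` to `w`, and no trail has more edges. -/
structure IsLongestTrail (K : ι → Finset V) (u : V) (L : List ι) (w : V) : Prop where
  isWalk : IsWalk K u L w
  nodup : L.Nodup
  length_le : ∀ ⦃u' M w'⦄, IsWalk K u' M w' → M.Nodup → M.length ≤ L.length

theorem exists_isLongestTrail [Finite ι] [Nonempty V] (K : ι → Finset V) :
    ∃ u L w, IsLongestTrail K u L w := by
  cases nonempty_fintype ι
  let lengths : Set ℕ := {n | ∃ u L w, IsWalk K u L w ∧ L.Nodup ∧ L.length = n}
  have hbdd : BddAbove lengths := by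
    refine ⟨Fintype.card ι, ?_⟩
    rintro _ ⟨u, L, w, -, hL, rfl⟩
    exact hL.length_le_card
  have hne : lengths.Nonempty :=
    ‹Nonempty V›.elim fun u => ⟨0, u, [], u, .nil u, List.nodup_nil, rfl⟩
  obtain ⟨u, L, w, hwalk, hL, hlen⟩ := Nat.sSup_mem hne hbdd
  exact ⟨u, L, w, hwalk, hL, fun u' M w' hM hnd =>
    hlen ▸ le_csSup hbdd ⟨u', M, w', hM, hnd, rfl⟩⟩

namespace IsLongestTrail

theorem mem_of_end_mem (hcard : ∀ i, (K i).card = 2) (h : IsLongestTrail K u L w) {i : ι}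
    (hi : w ∈ K i) : i ∈ L := by
  by_contra hiL
  obtain ⟨m, hm⟩ := h.isWalk.exists_concat hcard hi
  have hlen := h.length_le hm (List.nodup_append_comm.1 (List.nodup_cons.2 ⟨hiL, h.nodup⟩))
  simp at hlen

theorem end_eq_start [Fintype ι] (hcard : ∀ i, (K i).card = 2) (hK : IsEvenFamily K)
    (h : IsLongestTrail K u L w) : u = w := by
  classical
  have hsum : (L.map fun i => ∑ v ∈ K i, Pi.single w (1 : ZMod 2) v).sum = 0 := by
    rw [← List.sum_toFinset _ h.nodup, ← hK (Pi.single w 1)]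
    refine Finset.sum_subset (Finset.subset_univ _) fun i _ hi => ?_
    have hw : w ∉ K i := fun hw => hi (List.mem_toFinset.2 (h.mem_of_end_mem hcard hw))
    simp [hw]
  rw [h.isWalk.sum_eq hcard, CharTwo.add_eq_zero] at hsum
  by_contra hne
  simp [hne] at hsum

theorem mem_of_meets (hcard : ∀ i, (K i).card = 2) (h : IsLongestTrail K u L u) {i j : ι} {p : V}
    (hi : i ∈ L) (hpi : p ∈ K i) (hpj : p ∈ K j) : j ∈ L := by
  obtain ⟨M, hML, hM⟩ := h.isWalk.exists_perm_of_mem hcard hi hpi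
  have hlongest : IsLongestTrail K p M p :=
    ⟨hM, hML.nodup_iff.2 h.nodup, fun _ _ _ hN hnd => (h.length_le hN hnd).trans hML.length_eq.ge⟩
  exact hML.mem_iff.1 (hlongest.mem_of_end_mem hcard hpj)

theorem forall_mem (hcard : ∀ i, (K i).card = 2)
    (hconn : ∀ i j, ∀ p ∈ K i, ∀ q ∈ K j, Linked K p q) (h : IsLongestTrail K u L u) (j : ι) :
    j ∈ L := by
  by_contra hj
  have hnonempty : ∀ i, (K i).Nonempty := fun i => Finset.card_pos.1 (by simp [hcard i])
  obtain ⟨q, hq⟩ := hnonempty j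
  obtain rfl | hL := eq_or_ne L []
  · obtain ⟨m, hm⟩ := (IsWalk.nil q).exists_concat hcard hq
    exact absurd (h.length_le hm (List.nodup_singleton j)) (by simp)
  · obtain ⟨i, hi⟩ := List.exists_mem_of_ne_nil L hL
    obtain ⟨p, hp⟩ := hnonempty i
    obtain ⟨k, x, hx, y, hy, ⟨i', hi', hxi'⟩, hyA⟩ := (hconn i j p hp q hq).exists_mem_notMem
      (A := {v | ∃ i ∈ L, v ∈ K i}) ⟨i, hi, hp⟩
      fun ⟨i', hi', hqi'⟩ => hj (h.mem_of_meets hcard hi' hqi' hq)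
    exact hyA ⟨k, h.mem_of_meets hcard hi' hxi' hx, hy⟩

end IsLongestTrail

theorem exists_closed_trail [Fintype ι] [Nonempty V] (hcard : ∀ i, (K i).card = 2)
    (hK : IsEvenFamily K) (hconn : ∀ i j, ∀ p ∈ K i, ∀ q ∈ K j, Linked K p q) :
    ∃ u L, IsWalk K u L u ∧ L.Nodup ∧ ∀ i, i ∈ L := by
  obtain ⟨u, L, w, h⟩ := exists_isLongestTrail K
  obtain rfl := h.end_eq_start hcard hK
  exact ⟨u, L, h.isWalk, h.nodup, h.forall_mem hcard hconn⟩

theorem IsWalk.exists_vertices (h : IsWalk K u L w) :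
    ∃ v : Fin (L.length + 1) → V, v 0 = u ∧ v (Fin.last _) = w ∧
      ∀ i : Fin L.length, v i.castSucc ≠ v i.succ ∧ v i.castSucc ∈ K (L.get i) ∧
        v i.succ ∈ K (L.get i) := by
  induction h with
  | nil u => exact ⟨fun _ => u, rfl, rfl, fun i => i.elim0⟩
  | @cons u m w i L hu hm hum _ ih =>
    obtain ⟨v, rfl, rfl, hv⟩ := ih
    refine ⟨Fin.cons u v, rfl, rfl, Fin.cases ⟨hum, hu, hm⟩ fun j => ?_⟩
    exact hv j

theorem isEulerian_of_isWalk {V : Type} [Fintype ι] {T : ι → Finset V} {u : V}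
    (hwalk : IsWalk T u L u) (hnd : L.Nodup) (hall : ∀ i, i ∈ L) :
    IsEulerian (Finset.univ.val.map T) := by
  obtain ⟨v, hfirst, hlast, hstep⟩ := hwalk.exists_vertices
  refine ⟨L.length, v, T ∘ L.get, ⟨hfirst.trans hlast.symm, hstep⟩, ?_⟩
  have hL : (L : Multiset ι) = Finset.univ.val :=
    (Multiset.Nodup.ext (Multiset.coe_nodup.2 hnd) Finset.univ.nodup).2 (by simp [hall])
  rw [walkEdges, ← List.map_ofFn, List.ofFn_get, ← hL, Multiset.map_coe]

end Trails

theorem exists_mem_ne_ne_of_card_eq_three {V : Type*} {e : Finset V} (he : e.card = 3) (x y : V) :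
    ∃ z ∈ e, z ≠ x ∧ z ≠ y := by
  classical
  obtain ⟨z, hz, hzxy⟩ := Finset.exists_mem_notMem_of_card_lt_card
    (show ({x, y} : Finset V).card < e.card by grind [Finset.card_le_two])
  exact ⟨z, hz, by simpa using hzxy⟩

section Omissions

variable {V ι : Type*}

/-- A family of triples in which every pair of vertices is covered. -/
structure IsTripleCover (T : ι → Finset V) : Prop where
  card_eq : ∀ i, (T i).card = 3
  exists_mem : ∀ ⦃x y⦄, x ≠ y → ∃ i, x ∈ T i ∧ y ∈ T i

variable [DecidableEq V]

/-- The pairs that remain when the vertex `om i` is omitted from the triple `T i`; an Euler tour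
of these pairs is an Euler tour of the triples. -/
def kept (T : ι → Finset V) (om : ι → V) (i : ι) : Finset V :=
  (T i).erase (om i)

/-- A choice of one omitted vertex in each triple such that every vertex has even degree in the
graph of the remaining pairs. -/
structure IsEvenOmission [Fintype ι] (T : ι → Finset V) (om : ι → V) : Prop where
  mem : ∀ i, om i ∈ T i
  even : IsEvenFamily (kept T om)

variable {T : ι → Finset V} {om : ι → V} {i : ι}

theorem mem_kept {p : V} : p ∈ kept T om i ↔ p ≠ om i ∧ p ∈ T i :=
  Finset.mem_erase

theorem IsTripleCover.card_kept (hT : IsTripleCover T) (hom : ∀ i, om i ∈ T i) (i : ι) :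
    (kept T om i).card = 2 := by
  rw [kept, Finset.card_erase_of_mem (hom i), hT.card_eq]

theorem kept_congr {om' : ι → V} (h : om' i = om i) : kept T om' i = kept T om i := by
  rw [kept, kept, h]

theorem kept_update_of_ne [DecidableEq ι] {j : ι} (hji : j ≠ i) (y : V) :
    kept T (Function.update om i y) j = kept T om j :=
  kept_congr (Function.update_of_ne hji y om)

theorem isEvenFamily_kept_iff [Fintype ι] (hom : ∀ i, om i ∈ T i) :
    IsEvenFamily (kept T om) ↔
      ∀ χ : V → ZMod 2, ∑ i, ∑ v ∈ T i, χ v = ∑ i, χ (om i) := by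
  refine forall_congr' fun χ => ?_
  rw [← sub_eq_zero (b := ∑ i, χ (om i)), ← Finset.sum_sub_distrib]
  simp only [kept, Finset.sum_erase_eq_sub (hom _)]

end Omissions

section Selection

variable {V ι : Type*} [Fintype ι] {K : ι → Finset V}

theorem exists_sum_selection_eq [Nonempty V] (hcard : ∀ i, (K i).card = 2)
    (hconn : ∀ x y, Linked K x y) (φ : Module.Dual (ZMod 2) (V → ZMod 2))
    (hφ : φ 1 = Fintype.card ι) :
    ∃ c : ι → V, (∀ i, c i ∈ K i) ∧ ∀ χ, φ χ = ∑ i, χ (c i) := by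
  classical
  choose p q hpq hK using fun i => Finset.card_eq_two.1 (hcard i)
  let cut : (V → ZMod 2) →ₗ[ZMod 2] (ι → ZMod 2) :=
    LinearMap.pi fun i => .proj (p i) + .proj (q i)
  let defect : Module.Dual (ZMod 2) (V → ZMod 2) := φ - ∑ i, LinearMap.proj (p i)
  -- A colouring that cuts no pair is constant, and the defect vanishes on constants.
  have hdefect : defect ∈ (LinearMap.ker cut).dualAnnihilator := by
    rw [Submodule.mem_dualAnnihilator]
    intro χ hχ
    have huncut : ∀ i, Uncut χ (K i) := fun i =>
      (sum_eq_zero_iff_uncut (hcard i) χ).1 (by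
        rw [hK i, Finset.sum_pair (hpq i)]
        exact congrFun hχ i)
    have hconst : χ = χ (Classical.arbitrary V) • 1 :=
      funext fun v => by simpa using hconn v _ χ huncut
    rw [hconst]
    simp [defect, hφ]
  rw [← LinearMap.range_dualMap_eq_dualAnnihilator_ker] at hdefect
  obtain ⟨ψ, hψ⟩ := hdefect
  let coeff : ι → ZMod 2 := fun i => ψ fun j => if i = j then 1 else 0
  refine ⟨fun i => if coeff i = 0 then p i else q i, fun i => by grind, fun χ => ?_⟩
  have hchoice : ∀ i, χ (if coeff i = 0 then p i else q i) =
      (χ (p i) + χ (q i)) * coeff i + χ (p i) := fun i => by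
    obtain h | h : coeff i = 0 ∨ coeff i = 1 := by generalize coeff i = c; revert c; decide
    · simp [h]
    · rw [if_neg (by simp [h]), h]
      linear_combination -CharTwo.add_self_eq_zero (χ (p i))
  calc φ χ = defect χ + ∑ i, χ (p i) := by simp [defect]
    _ = ψ (cut χ) + ∑ i, χ (p i) := by rw [← hψ]; rfl
    _ = ∑ i, χ (if coeff i = 0 then p i else q i) := by
        rw [LinearMap.pi_apply_eq_sum_univ ψ, ← Finset.sum_add_distrib]
        exact Finset.sum_congr rfl fun i _ => (hchoice i).symm

end Selection

section SpanMaximal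

variable {V ι : Type*} [DecidableEq V]

/-- The omission `om` makes the connected component of `r` as large as any omission can make any
component. -/
structure IsSpanMaximal (T : ι → Finset V) (om : ι → V) (r : V) : Prop where
  mem : ∀ i, om i ∈ T i
  ncard_le : ∀ om' r', (∀ i, om' i ∈ T i) →
    (component (kept T om') r').ncard ≤ (component (kept T om) r).ncard

theorem exists_isSpanMaximal [Finite V] [Nonempty V] [Finite ι] {T : ι → Finset V}
    (hT : ∀ i, (T i).Nonempty) : ∃ om r, IsSpanMaximal T om r := by
  choose om₀ hom₀ using hT
  obtain ⟨⟨om, r⟩, hom, hmax⟩ := Set.exists_max_image {s : (ι → V) × V | ∀ i, s.1 i ∈ T i}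
    (fun s => (component (kept T s.1) s.2).ncard) (Set.toFinite _)
    ⟨(om₀, Classical.arbitrary V), hom₀⟩
  exact ⟨om, r, hom, fun om' r' hom' => hmax (om', r') hom'⟩

namespace IsSpanMaximal

variable [Finite V] {T : ι → Finset V} {om : ι → V} {r : V}

theorem false_of_linked_update [DecidableEq ι] (h : IsSpanMaximal T om r) {i : ι} {x y w : V}
    (hy : y ∈ T i) (hx : x ∈ T i) (hw : w ∈ T i) (hxy : x ≠ y) (hwy : w ≠ y)
    (hrx : Linked (kept T om) r x) (hrw : ¬ Linked (kept T om) r w)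
    (hmono : ∀ z, Linked (kept T om) r z → Linked (kept T (Function.update om i y)) r z) :
    False := by
  have hom' : ∀ j, Function.update om i y j ∈ T j := fun j => by
    obtain rfl | hji := eq_or_ne j i
    · simpa using hy
    · simpa [hji] using h.mem j
  have hxw : Linked (kept T (Function.update om i y)) x w :=
    linked_of_mem (i := i) (by simp [mem_kept, hxy, hx]) (by simp [mem_kept, hwy, hw])
  refine (h.ncard_le _ r hom').not_gt (Set.ncard_lt_ncard (Set.ssubset_iff_insert.2
    ⟨w, hrw, Set.insert_subset ?_ hmono⟩) (Set.toFinite _))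
  exact (hmono x hrx).trans hxw

theorem om_eq_of_crossing (hT : IsTripleCover T) (h : IsSpanMaximal T om r) {i : ι} {x v : V}
    (hx : x ∈ T i) (hv : v ∈ T i) (hrx : Linked (kept T om) r x)
    (hrv : ¬ Linked (kept T om) r v) : om i = v := by
  classical
  by_contra hiv
  have hvK : v ∈ kept T om i := mem_kept.2 ⟨Ne.symm hiv, hv⟩
  obtain ⟨y, hy, hyx, hyv⟩ := exists_mem_ne_ne_of_card_eq_three (hT.card_eq i) x v
  refine h.false_of_linked_update hy hx hv hyx.symm hyv.symm hrx hrv fun z hz χ hχ =>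
    hz.eq_of_uncut fun j p hp hrp => ?_
  have hji : j ≠ i := by
    rintro rfl
    exact hrv (hrp.trans (linked_of_mem hp hvK))
  simpa [kept_update_of_ne hji] using hχ j

theorem exists_bridge_cut (hT : IsTripleCover T) (h : IsSpanMaximal T om r) {i : ι} {x : V}
    (hx : x ∈ T i) (hrx : Linked (kept T om) r x) (hrw : ¬ Linked (kept T om) r (om i)) :
    ∃ χ, (∀ j ≠ i, Uncut χ (kept T om j)) ∧ ¬ Uncut χ (kept T om i) := by
  classical
  by_contra! hχ
  obtain ⟨y, hy, hyx, hyw⟩ := exists_mem_ne_ne_of_card_eq_three (hT.card_eq i) x (om i)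
  refine h.false_of_linked_update hy hx (h.mem i) hyx.symm hyw.symm hrx hrw fun z hz χ hχ' =>
    hz χ fun j => ?_
  have hne : ∀ j ≠ i, Uncut χ (kept T om j) := fun j hji => by
    simpa [kept_update_of_ne hji] using hχ' j
  obtain rfl | hji := eq_or_ne j i
  · exact hχ χ hne
  · exact hne j hji

theorem eq_of_mem_kept_of_isNonCut (hT : IsTripleCover T) (h : IsSpanMaximal T om r) {y : V}
    (hry : Linked (kept T om) r y) (hy : IsNonCut (kept T om) y) {i j : ι} (hyi : y ∈ kept T om i)
    (hrw : ¬ Linked (kept T om) r (om i)) (hyj : y ∈ kept T om j) : j = i := by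
  by_contra hji
  obtain ⟨χ, hχ, hχi⟩ := h.exists_bridge_cut hT (mem_kept.1 hyi).2 hry hrw
  have hcard := hT.card_kept h.mem
  obtain ⟨x, hx, hxy⟩ := exists_mem_ne_of_card_eq_two (hcard i) y
  obtain ⟨c, hc, hcy⟩ := exists_mem_ne_of_card_eq_two (hcard j) y
  have hK : {x, y} = kept T om i := pair_eq_of_mem (hcard i) hx hyi hxy
  have hχxc : χ x = χ c := by
    refine hy x c (linked_of_mem hyi hx) (linked_of_mem hyj hc) hxy hcy χ fun k => ?_
    obtain rfl | hki := eq_or_ne k i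
    · change Uncut χ ((kept T om k).erase y)
      rw [← hK]
      grind [Uncut]
    · exact (hχ k hki).mono (Finset.erase_subset y _)
  have hχcy : χ c = χ y := hχ j hji c hc y hyj
  rw [← hK] at hχi
  grind [Uncut]

theorem exists_mem_kept_om_eq (hT : IsTripleCover T) (h : IsSpanMaximal T om r) {y w : V}
    (hry : Linked (kept T om) r y) (hrw : ¬ Linked (kept T om) r w) :
    ∃ i, y ∈ kept T om i ∧ om i = w := by
  have hyw : y ≠ w := fun e => hrw (e ▸ hry)
  obtain ⟨i, hy, hwi⟩ := hT.exists_mem hyw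
  have hi := h.om_eq_of_crossing hT hy hwi hry hrw
  exact ⟨i, mem_kept.2 ⟨hi ▸ hyw, hy⟩, hi⟩

theorem exists_pendant_pair (hT : IsTripleCover T) (h : IsSpanMaximal T om r) {w : V}
    (hrw : ¬ Linked (kept T om) r w) :
    ∃ i y, Linked (kept T om) r y ∧ y ∈ kept T om i ∧ (∀ j, y ∈ kept T om j → j = i) ∧
      ∀ z, Linked (kept T om) r z → z ∈ kept T om i := by
  have hcard := hT.card_kept h.mem
  obtain ⟨i₀, hri₀, -⟩ := h.exists_mem_kept_om_eq hT (.refl _ r) hrw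
  obtain ⟨x, hx, hxr⟩ := exists_mem_ne_of_card_eq_two (hcard i₀) r
  obtain ⟨y, hyr, hry, hync⟩ := exists_isNonCut_ne (linked_of_mem hri₀ hx) hxr
  obtain ⟨y', hyy', hyl, hync'⟩ := exists_isNonCut_ne hry.symm hyr.symm
  have hry' := hry.trans hyl
  obtain ⟨i, hyi, rfl⟩ := h.exists_mem_kept_om_eq hT hry hrw
  obtain ⟨i', hyi', hi'⟩ := h.exists_mem_kept_om_eq hT hry' hrw
  have honly : ∀ j, y ∈ kept T om j → j = i := fun j =>
    h.eq_of_mem_kept_of_isNonCut hT hry hync hyi hrw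
  have honly' : ∀ j, y' ∈ kept T om j → j = i' := fun j =>
    h.eq_of_mem_kept_of_isNonCut hT hry' hync' hyi' (hi' ▸ hrw)
  obtain rfl : i = i' := by
    obtain ⟨t, hyt, hyt'⟩ := hT.exists_mem hyy'
    by_cases hy : y = om t
    · obtain rfl := honly' t (mem_kept.2 ⟨hy ▸ hyy', hyt⟩)
      exact absurd (hy.trans hi') (mem_kept.1 hyi).1
    · obtain rfl := honly t (mem_kept.2 ⟨hy, hyt'⟩)
      exact honly' t (mem_kept.2 ⟨hi' ▸ (mem_kept.1 hyi').1, hyt⟩)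
  have hK : {y, y'} = kept T om i := pair_eq_of_mem (hcard i) hyi hyi' hyy'.symm
  refine ⟨i, y, hry, hyi, honly, fun z hrz => ?_⟩
  by_contra hzi
  obtain ⟨k, p, hpk, q, hqk, hp, hq⟩ :=
    (hry.symm.trans hrz).exists_mem_notMem (A := kept T om i) hyi hzi
  have hki : k = i := by grind
  exact hq (hki ▸ hqk)

theorem linked [Nontrivial ι] (hT : IsTripleCover T) (h : IsSpanMaximal T om r) (w : V) :
    Linked (kept T om) r w := by
  by_contra hrw
  obtain ⟨i, y, hry, hyi, honly, hR⟩ := h.exists_pendant_pair hT hrw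
  have hout : ∀ v, ¬ Linked (kept T om) r v → ∀ j, y ∈ T j → v ∈ T j → j = i ∧ v = om i := by
    intro v hrv j hyj hvj
    have hj := h.om_eq_of_crossing hT hyj hvj hry hrv
    have hyv : y ≠ v := fun e => hrv (e ▸ hry)
    obtain rfl := honly j (mem_kept.2 ⟨hj ▸ hyv, hyj⟩)
    exact ⟨rfl, hj.symm⟩
  have hmem : ∀ v, v ∈ T i := fun v => by
    by_cases hrv : Linked (kept T om) r v
    · exact (mem_kept.1 (hR v hrv)).2
    · obtain ⟨j, hyj, hvj⟩ := hT.exists_mem (show y ≠ v from fun e => hrv (e ▸ hry))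
      exact (hout v hrv j hyj hvj).1 ▸ hvj
  obtain ⟨j, hji⟩ := exists_ne i
  have hTj : T j = T i := Finset.eq_of_subset_of_card_le (fun v _ => hmem v)
    (by rw [hT.card_eq, hT.card_eq])
  exact hji (hout w hrw j (hTj ▸ hmem y) (hTj ▸ hmem w)).1

end IsSpanMaximal

theorem exists_isEvenOmission [Finite V] [Nonempty V] [Fintype ι] [Nontrivial ι]
    {T : ι → Finset V} (hT : IsTripleCover T) : ∃ om, IsEvenOmission T om := by
  obtain ⟨om, r, hom⟩ :=
    exists_isSpanMaximal (T := T) fun i => Finset.card_pos.1 (by simp [hT.card_eq i])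
  obtain ⟨c, hc, hsum⟩ := exists_sum_selection_eq (hT.card_kept hom.mem)
    (fun x y => (hom.linked hT x).symm.trans (hom.linked hT y))
    (∑ i, ∑ v ∈ T i, LinearMap.proj v) (by
      have hodd : (3 : ZMod 2) = 1 := by decide
      simp [hT.card_eq, hodd])
  have hcT : ∀ i, c i ∈ T i := fun i => (mem_kept.1 (hc i)).2
  exact ⟨c, hcT, (isEvenFamily_kept_iff hcT).2 fun χ => by simpa using hsum χ⟩

end SpanMaximal

section Rotation

variable {V ι : Type*} {T : ι → Finset V} {om : ι → V}

/-- The omitted vertex of `T i` is one of `x` and `y` and can be exchanged for the other one. -/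
def CanToggle (T : ι → Finset V) (om : ι → V) (i : ι) (x y : V) : Prop :=
  x ∈ T i ∧ y ∈ T i ∧ (om i = x ∨ om i = y)

theorem CanToggle.symm {i : ι} {x y : V} (h : CanToggle T om i x y) : CanToggle T om i y x :=
  ⟨h.2.1, h.1, h.2.2.symm⟩

variable [DecidableEq V] [Fintype ι]

theorem IsEvenOmission.exists_exchange (h : IsEvenOmission T om) {κ : Type*} [Fintype κ]
    {t : κ → ι} (ht : t.Injective) {x y : κ → V} (hxy : ∀ j, CanToggle T om (t j) (x j) (y j))
    (hbal : ∀ χ : V → ZMod 2, ∑ j, χ (x j) = ∑ j, χ (y j)) :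
    ∃ om', IsEvenOmission T om' ∧ (∀ i, (∀ j, t j ≠ i) → om' i = om i) ∧
      ∀ j, om' (t j) = Equiv.swap (x j) (y j) (om (t j)) := by
  classical
  let om' : ι → V := Function.extend t (fun j => Equiv.swap (x j) (y j) (om (t j))) om
  have hon : ∀ j, om' (t j) = Equiv.swap (x j) (y j) (om (t j)) := ht.extend_apply _ _
  have hoff : ∀ i, (∀ j, t j ≠ i) → om' i = om i := fun i hi =>
    Function.extend_apply' _ _ _ fun ⟨j, hj⟩ => hi j hj
  have hmem : ∀ i, om' i ∈ T i := fun i => by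
    by_cases hi : ∃ j, t j = i
    · obtain ⟨j, rfl⟩ := hi
      obtain ⟨hxT, hyT, hom | hom⟩ := hxy j <;> simpa [hon, hom]
    · push Not at hi
      simpa [hoff i hi] using h.mem i
  refine ⟨om', ⟨hmem, (isEvenFamily_kept_iff hmem).2 fun χ => ?_⟩, hoff, hon⟩
  rw [(isEvenFamily_kept_iff h.mem).1 h.even, ← sub_eq_zero, ← Finset.sum_sub_distrib,
    ← Fintype.sum_of_injective t ht (fun j => χ (x j) - χ (y j)) _ (fun i hi => ?_)
      fun j => ?_]
  · rw [Finset.sum_sub_distrib, hbal, sub_self]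
  · rw [hoff i fun j hj => hi ⟨j, hj⟩, sub_self]
  · obtain ⟨-, -, hom | hom⟩ := hxy j <;> simp [hon, hom, CharTwo.sub_eq_add, add_comm]

theorem IsEvenOmission.exists_rotation_two (h : IsEvenOmission T om) {i j : ι} {x y : V}
    (hnd : [i, j].Nodup) (hi : CanToggle T om i x y) (hj : CanToggle T om j y x) :
    ∃ om', IsEvenOmission T om' ∧ (∀ t, t ∉ [i, j] → om' t = om t) ∧
      om' i = Equiv.swap x y (om i) ∧ om' j = Equiv.swap y x (om j) := by
  obtain ⟨om', hom', hoff, hon⟩ := h.exists_exchange (List.nodup_iff_injective_get.1 hnd)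
    (x := ![x, y]) (y := ![y, x]) (Fin.forall_fin_two.2 ⟨hi, hj⟩)
    (fun χ => by simp [Fin.sum_univ_succ, add_comm])
  exact ⟨om', hom', fun t ht => hoff t fun k hk => ht (hk ▸ List.get_mem _ k), hon 0, hon 1⟩

theorem IsEvenOmission.exists_rotation_three (h : IsEvenOmission T om) {i j k : ι} {x y z : V}
    (hnd : [i, j, k].Nodup) (hi : CanToggle T om i x y) (hj : CanToggle T om j y z)
    (hk : CanToggle T om k z x) :
    ∃ om', IsEvenOmission T om' ∧ (∀ t, t ∉ [i, j, k] → om' t = om t) ∧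
      om' i = Equiv.swap x y (om i) ∧ om' j = Equiv.swap y z (om j) ∧
      om' k = Equiv.swap z x (om k) := by
  obtain ⟨om', hom', hoff, hon⟩ := h.exists_exchange (List.nodup_iff_injective_get.1 hnd)
    (x := ![x, y, z]) (y := ![y, z, x])
    (Fin.forall_fin_succ.2 ⟨hi, Fin.forall_fin_two.2 ⟨hj, hk⟩⟩)
    (fun χ => by simp [Fin.sum_univ_succ]; ring)
  exact ⟨om', hom', fun t ht => hoff t fun k hk => ht (hk ▸ List.get_mem _ k), hon 0, hon 1, hon 2⟩

theorem IsEvenOmission.exists_rotation_four (h : IsEvenOmission T om) {i j k l : ι} {w x y z : V}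
    (hnd : [i, j, k, l].Nodup) (hi : CanToggle T om i w x) (hj : CanToggle T om j x y)
    (hk : CanToggle T om k y z) (hl : CanToggle T om l z w) :
    ∃ om', IsEvenOmission T om' ∧ (∀ t, t ∉ [i, j, k, l] → om' t = om t) ∧
      om' i = Equiv.swap w x (om i) ∧ om' j = Equiv.swap x y (om j) ∧
      om' k = Equiv.swap y z (om k) ∧ om' l = Equiv.swap z w (om l) := by
  obtain ⟨om', hom', hoff, hon⟩ := h.exists_exchange (List.nodup_iff_injective_get.1 hnd)
    (x := ![w, x, y, z]) (y := ![x, y, z, w])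
    (Fin.forall_fin_succ.2 ⟨hi, Fin.forall_fin_succ.2 ⟨hj, Fin.forall_fin_two.2 ⟨hk, hl⟩⟩⟩)
    (fun χ => by simp [Fin.sum_univ_succ]; ring)
  exact ⟨om', hom', fun t ht => hoff t fun k hk => ht (hk ▸ List.get_mem _ k),
    hon 0, hon 1, hon 2, hon 3⟩

end Rotation

section OmissionComponents

variable {V ι : Type*} [DecidableEq V] {T : ι → Finset V} {om om' : ι → V} {a : V} {i : ι}

theorem om_eq_of_mem_componentEdges (hi : i ∈ componentEdges (kept T om) a) {p : V} (hp : p ∈ T i)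
    (hpS : p ∉ component (kept T om) a) : om i = p := by
  by_contra hne
  exact hpS (hi (mem_kept.2 ⟨Ne.symm hne, hp⟩))

theorem om_eq_of_notMem_componentEdges (hi : i ∉ componentEdges (kept T om) a) {p : V}
    (hp : p ∈ T i) (hpS : p ∈ component (kept T om) a) : om i = p := by
  by_contra hne
  exact hi (mem_componentEdges_of_mem (mem_kept.2 ⟨Ne.symm hne, hp⟩) hpS)

theorem canToggle_of_notMem_of_mem {u s : V} (hu : u ∈ T i) (hs : s ∈ T i)
    (huS : u ∉ component (kept T om) a) (hsS : s ∈ component (kept T om) a) :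
    CanToggle T om i u s := by
  by_cases hi : i ∈ componentEdges (kept T om) a
  · exact ⟨hu, hs, .inl (om_eq_of_mem_componentEdges hi hu huS)⟩
  · exact ⟨hu, hs, .inr (om_eq_of_notMem_componentEdges hi hs hsS)⟩

theorem notMem_component_of_mem_kept (hi : i ∉ componentEdges (kept T om) a) {p : V}
    (hp : p ∈ kept T om i) : p ∉ component (kept T om) a :=
  fun hpS => hi (mem_componentEdges_of_mem hp hpS)

theorem IsTripleCover.exists_mem_kept_mem_component (hT : IsTripleCover T)
    (hi : i ∈ componentEdges (kept T om) a) (hom' : ∀ i, om' i ∈ T i) :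
    ∃ p ∈ kept T om' i, p ∈ component (kept T om) a := by
  obtain ⟨p, q, hpq, hK⟩ := Finset.card_eq_two.1 (hT.card_kept hom' i)
  have hp : p ∈ kept T om' i := by simp [hK]
  have hq : q ∈ kept T om' i := by simp [hK]
  by_cases hpS : p ∈ component (kept T om) a
  · exact ⟨p, hp, hpS⟩
  · have hom := om_eq_of_mem_componentEdges hi (mem_kept.1 hp).2 hpS
    exact ⟨q, hq, hi (mem_kept.2 ⟨hom ▸ hpq.symm, (mem_kept.1 hq).2⟩)⟩

end OmissionComponents

section MaximalOmission

variable {V ι : Type*} [DecidableEq V]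

/-- Four vertices `u`, `u'`, `v`, `om g` outside the component of `a`, with triples `f₁` and `f₂`
keeping `u u'` and `u v`, and a pair `g` of the component containing `om f₁`. A triple outside the
component of a maximal omission would produce this configuration, which an exchange around a cycle
of length four excludes. -/
structure IsObstruction (T : ι → Finset V) (om : ι → V) (a : V) (f₁ f₂ g : ι) (u u' v : V) :
    Prop where
  f₁_notMem : f₁ ∉ componentEdges (kept T om) a
  f₂_notMem : f₂ ∉ componentEdges (kept T om) a
  g_mem : g ∈ componentEdges (kept T om) a
  u_mem_f₁ : u ∈ kept T om f₁
  u'_mem_f₁ : u' ∈ kept T om f₁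
  u_ne : u ≠ u'
  u_mem_f₂ : u ∈ kept T om f₂
  v_mem_f₂ : v ∈ kept T om f₂
  v_notMem_f₁ : v ∉ kept T om f₁
  om_f₁_mem : om f₁ ∈ kept T om g
  om_g_notMem : om g ∉ component (kept T om) a
  om_g_notMem_f₁ : om g ∉ kept T om f₁
  om_g_notMem_f₂ : om g ∉ kept T om f₂

variable [Fintype ι]

/-- An even omission whose component at `a` has the greatest number of edges among all components
of all even omissions. -/
structure IsMaximalOmission (T : ι → Finset V) (om : ι → V) (a : V) : Prop
    extends IsEvenOmission T om where
  ncard_le : ∀ om' x, IsEvenOmission T om' →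
    (componentEdges (kept T om') x).ncard ≤ (componentEdges (kept T om) a).ncard

theorem exists_isMaximalOmission [Finite V] [Nonempty V] {T : ι → Finset V}
    (hT : ∃ om, IsEvenOmission T om) : ∃ om a, IsMaximalOmission T om a := by
  obtain ⟨om₀, hom₀⟩ := hT
  obtain ⟨⟨om, a⟩, hom, hmax⟩ := Set.exists_max_image {s : (ι → V) × V | IsEvenOmission T s.1}
    (fun s => (componentEdges (kept T s.1) s.2).ncard) (Set.toFinite _)
    ⟨(om₀, Classical.arbitrary V), hom₀⟩
  exact ⟨om, a, hom, fun om' x hom' => hmax (om', x) hom'⟩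

namespace IsMaximalOmission

variable {T : ι → Finset V} {om om' : ι → V} {a : V}

local notation "S" => component (kept T om) a
local notation "D" => componentEdges (kept T om) a

theorem false_of_linked (h : IsMaximalOmission T om a) (hom' : IsEvenOmission T om') {x : V}
    (hD : ∀ i ∈ D, ∃ p ∈ kept T om' i, Linked (kept T om') x p)
    {f : ι} (hf : f ∉ D) {q : V} (hq : q ∈ kept T om' f) (hxq : Linked (kept T om') x q) :
    False := by
  refine (h.ncard_le om' x hom').not_gt (Set.ncard_lt_ncard (Set.ssubset_iff_insert.2
    ⟨f, hf, Set.insert_subset (mem_componentEdges_of_mem hq hxq) fun i hi => ?_⟩)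
    (Set.toFinite _))
  obtain ⟨p, hp, hxp⟩ := hD i hi
  exact mem_componentEdges_of_mem hp hxp

theorem false_of_uncut (hT : IsTripleCover T) (h : IsMaximalOmission T om a)
    (hom' : IsEvenOmission T om')
    (hD : ∀ χ, (∀ i, Uncut χ (kept T om' i)) → ∀ i ∈ D, Uncut χ (kept T om i))
    {f : ι} (hf : f ∉ D) {q : V} (hq : q ∈ kept T om' f) (hqS : q ∈ S) : False := by
  have hlinked : ∀ x ∈ S, Linked (kept T om') a x := fun x hx χ hχ =>
    hx.eq_of_uncut fun i p hp hap => hD χ hχ i (mem_componentEdges_of_mem hp hap)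
  refine h.false_of_linked hom' (fun i hi => ?_) hf hq (hlinked q hqS)
  obtain ⟨p, hp, hpS⟩ := hT.exists_mem_kept_mem_component hi hom'.mem
  exact ⟨p, hp, hlinked p hpS⟩

/-- By parity, changing a single edge of an even component cannot disconnect it. -/
theorem false_of_modify_one (hT : IsTripleCover T) (h : IsMaximalOmission T om a)
    (hom' : IsEvenOmission T om') (g : ι) (hD : ∀ i ∈ D, i ≠ g → om' i = om i)
    {f : ι} (hf : f ∉ D) {q : V} (hq : q ∈ T f) (hqf : q ≠ om' f) (hqS : q ∈ S) : False := by
  refine h.false_of_uncut hT hom' (fun χ hχ i hi => ?_) hf (mem_kept.2 ⟨hqf, hq⟩) hqS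
  have hne : ∀ j ∈ D, j ≠ g → Uncut χ (kept T om j) := fun j hj hjg =>
    kept_congr (T := T) (hD j hj hjg) ▸ hχ j
  obtain rfl | hig := eq_or_ne i g
  · exact h.even.uncut_of_forall_ne (hT.card_kept h.mem) hi hne
  · exact hne i hi hig

theorem false_of_vacate (hT : IsTripleCover T) (h : IsMaximalOmission T om a)
    (hom' : IsEvenOmission T om') {b : V} (hb : IsNonCut (kept T om) b) (hbS : b ∈ S)
    (hD : ∀ i ∈ D, om' i = om i ∨ om' i = b) {f j : ι} (hf : f ∉ D) (hj : j ∈ D) {w : V}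
    (hwf : w ∈ kept T om' f) (hwj : w ∈ kept T om' j) : False := by
  have hsub : ∀ i ∈ D, (kept T om i).erase b ⊆ kept T om' i := fun i hi q hq => by
    simp only [Finset.mem_erase, mem_kept] at hq ⊢
    grind
  have hlinked : ∀ x y, x ∈ S → y ∈ S → x ≠ b → y ≠ b → Linked (kept T om') x y := by
    intro x y hx hy hxb hyb χ hχ
    refine (hb x y (hbS.symm.trans hx) (hbS.symm.trans hy) hxb hyb).eq_of_uncut
      fun i p hp hxp => (hχ i).mono (hsub i ?_)
    exact mem_componentEdges_of_mem (Finset.mem_of_mem_erase hp)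
      (hx.trans (hxp.mono fun i => Finset.erase_subset b _))
  have hexists : ∀ i ∈ D, ∃ p ∈ kept T om' i, p ∈ S ∧ p ≠ b := fun i hi => by
    obtain ⟨p, hp, hpb⟩ := exists_mem_ne_of_card_eq_two (hT.card_kept h.mem i) b
    exact ⟨p, hsub i hi (Finset.mem_erase.2 ⟨hpb, hp⟩), hi hp, hpb⟩
  obtain ⟨e, he, heS, heb⟩ := hexists j hj
  refine h.false_of_linked hom' (x := e) (fun i hi => ?_) hf hwf (linked_of_mem he hwj)
  obtain ⟨p, hp, hpS, hpb⟩ := hexists i hi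
  exact ⟨p, hp, hlinked e p heS hpS heb hpb⟩

theorem eq_of_mem_noncut (hT : IsTripleCover T) (h : IsMaximalOmission T om a) {b : V}
    (hb : IsNonCut (kept T om) b) (hbS : b ∈ S) {f : ι} (hf : f ∉ D) (hr : om f ∉ S) {x : V}
    (hx : x ∈ kept T om f) {i j : ι} (hxi : x ∈ T i) (hbi : b ∈ T i) (hrj : om f ∈ T j)
    (hbj : b ∈ T j) : i = j := by
  by_contra hij
  have hxS : x ∉ S := notMem_component_of_mem_kept hf hx
  have hbf : b ∉ T f := fun hbf => hr (om_eq_of_notMem_componentEdges hf hbf hbS ▸ hbS)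
  have hxb : x ≠ b := fun e => hxS (e ▸ hbS)
  have hrb : om f ≠ b := fun e => hr (e ▸ hbS)
  obtain ⟨hxr, hxf⟩ := mem_kept.1 hx
  obtain ⟨om', hom', hoff, hf', hi', hj'⟩ := h.exists_rotation_three (i := f) (j := i) (k := j)
    (by grind) ⟨h.mem f, hxf, .inl rfl⟩ (canToggle_of_notMem_of_mem hxi hbi hxS hbS)
    (canToggle_of_notMem_of_mem hrj hbj hr hbS).symm
  rw [Equiv.swap_apply_left] at hf'
  by_cases hiD : i ∈ D
  · by_cases hjD : j ∈ D
    · rw [om_eq_of_mem_componentEdges hiD hxi hxS, Equiv.swap_apply_left] at hi'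
      rw [om_eq_of_mem_componentEdges hjD hrj hr, Equiv.swap_apply_right] at hj'
      exact h.false_of_vacate hT hom' hb hbS (by grind) hf hjD
        (mem_kept.2 ⟨hf' ▸ hxr.symm, h.mem f⟩) (mem_kept.2 ⟨hj' ▸ hrb, hrj⟩)
    · rw [om_eq_of_notMem_componentEdges hjD hbj hbS, Equiv.swap_apply_left] at hj'
      exact h.false_of_modify_one hT hom' i (by grind) hjD hbj (hj' ▸ hrb.symm) hbS
  · rw [om_eq_of_notMem_componentEdges hiD hbi hbS, Equiv.swap_apply_right] at hi'
    exact h.false_of_modify_one hT hom' j (by grind) hiD hbi (hi' ▸ hxb.symm) hbS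

theorem om_mem_component [Finite V] (hT : IsTripleCover T) (h : IsMaximalOmission T om a) {f : ι}
    (hf : f ∉ D) : om f ∈ S := by
  by_contra hr
  obtain ⟨b, hbS, hb⟩ := exists_isNonCut (kept T om) a
  have hT' : ∀ p ∉ S, ∃ i, p ∈ T i ∧ b ∈ T i := fun p hp => hT.exists_mem fun e => hp (e ▸ hbS)
  obtain ⟨j, hrj, hbj⟩ := hT' _ hr
  have hsub : insert b (T f) ⊆ T j := by
    refine Finset.insert_subset hbj fun x hx => ?_
    obtain rfl | hxr := eq_or_ne x (om f)
    · exact hrj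
    · have hxf : x ∈ kept T om f := mem_kept.2 ⟨hxr, hx⟩
      obtain ⟨i, hxi, hbi⟩ := hT' x (notMem_component_of_mem_kept hf hxf)
      exact h.eq_of_mem_noncut hT hb hbS hf hr hxf hxi hbi hrj hbj ▸ hxi
  have hbf : b ∉ T f := fun hbf => hr (om_eq_of_notMem_componentEdges hf hbf hbS ▸ hbS)
  have hcard := Finset.card_le_card hsub
  rw [Finset.card_insert_of_notMem hbf, hT.card_eq, hT.card_eq] at hcard
  omega

theorem eq_of_mem_of_om_mem [Finite V] (hT : IsTripleCover T) (h : IsMaximalOmission T om a)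
    {f d : ι} (hf : f ∉ D) {u : V} (hu : u ∈ kept T om f) (hud : u ∈ T d) (hsd : om f ∈ T d) :
    d = f := by
  by_contra hdf
  have huS := notMem_component_of_mem_kept hf hu
  have hsS := h.om_mem_component hT hf
  obtain ⟨hus, huf⟩ := mem_kept.1 hu
  obtain ⟨om', hom', hoff, hf', -⟩ := h.exists_rotation_two (i := f) (j := d) (by grind)
    ⟨huf, h.mem f, .inr rfl⟩ (canToggle_of_notMem_of_mem hud hsd huS hsS).symm
  rw [Equiv.swap_apply_right] at hf'
  exact h.false_of_modify_one hT hom' d (by grind) hf (h.mem f) (hf' ▸ hus.symm) hsS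

theorem exists_notMem_mem_kept [Finite V] (hT : IsTripleCover T) (h : IsMaximalOmission T om a)
    {u v : V} (hu : u ∉ S) (hv : v ∉ S) (huv : u ≠ v) :
    ∃ i ∉ D, u ∈ kept T om i ∧ v ∈ kept T om i := by
  obtain ⟨i, hui, hvi⟩ := hT.exists_mem huv
  have hi : i ∉ D := fun hi => huv ((om_eq_of_mem_componentEdges hi hui hu).symm.trans
    (om_eq_of_mem_componentEdges hi hvi hv))
  have hom := h.om_mem_component hT hi
  exact ⟨i, hi, mem_kept.2 ⟨fun e => hu (e ▸ hom), hui⟩, mem_kept.2 ⟨fun e => hv (e ▸ hom), hvi⟩⟩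

/-- Exchanging along the cycle `u`, `om f`, `om g` attaches `f` to the component, so by maximality
it must disconnect the component. -/
theorem exists_cut_of_exchange [Finite V] (hT : IsTripleCover T) (h : IsMaximalOmission T om a)
    {f g i : ι} {u : V} (hf : f ∉ D) (huf : u ∈ kept T om f) (hg : g ∈ D)
    (hfg : om f ∈ kept T om g) (hgS : om g ∈ S) (hui : u ∈ T i) (hgi : om g ∈ T i) :
    ∃ χ, (∀ j ∈ D, j ≠ g → j ≠ i → Uncut χ (kept T om j)) ∧ ¬ Uncut χ (kept T om g) ∧
      ∀ q ∈ kept T om g, q ≠ om f → χ q = χ (om g) := by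
  have huS := notMem_component_of_mem_kept hf huf
  obtain ⟨hus, hufT⟩ := mem_kept.1 huf
  obtain ⟨hsz, hsg⟩ := mem_kept.1 hfg
  have hsS := h.om_mem_component hT hf
  have hig : i ≠ g := by
    rintro rfl
    exact huS (om_eq_of_mem_componentEdges hg hui huS ▸ hgS)
  have hif : i ≠ f := by
    rintro rfl
    exact hsz (om_eq_of_notMem_componentEdges hf hgi hgS)
  obtain ⟨om', hom', hoff, hf', hg', -⟩ := h.exists_rotation_three (i := f) (j := g) (k := i)
    (by grind) ⟨hufT, h.mem f, .inr rfl⟩ ⟨hsg, h.mem g, .inr rfl⟩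
    (canToggle_of_notMem_of_mem hui hgi huS hgS).symm
  rw [Equiv.swap_apply_right] at hf' hg'
  obtain ⟨χ, hχ', hcut⟩ : ∃ χ, (∀ j, Uncut χ (kept T om' j)) ∧
      ¬ ∀ j ∈ D, Uncut χ (kept T om j) := by
    by_contra! hχ
    exact h.false_of_uncut hT hom' hχ hf (mem_kept.2 ⟨hf' ▸ hus.symm, h.mem f⟩) hsS
  have hχ : ∀ j ∈ D, j ≠ g → j ≠ i → Uncut χ (kept T om j) := fun j hj hjg hji =>
    kept_congr (T := T) (hoff j (by grind)) ▸ hχ' j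
  refine ⟨χ, hχ, fun hχg => hcut fun j hj => ?_, fun q hq hqs => ?_⟩
  · have hne : ∀ k ∈ D, k ≠ i → Uncut χ (kept T om k) := fun k hk hki => by
      obtain rfl | hkg := eq_or_ne k g
      · exact hχg
      · exact hχ k hk hkg hki
    obtain rfl | hji := eq_or_ne j i
    · exact h.even.uncut_of_forall_ne (hT.card_kept h.mem) hj hne
    · exact hne j hj hji
  · exact hχ' g q (mem_kept.2 ⟨hg' ▸ hqs, (mem_kept.1 hq).2⟩) (om g)
      (mem_kept.2 ⟨hg' ▸ hsz.symm, h.mem g⟩)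

theorem exists_mem_kept_om_om [Finite V] (hT : IsTripleCover T) (h : IsMaximalOmission T om a)
    {f₁ f₂ : ι} (hf₁ : f₁ ∉ D) (hf₂ : f₂ ∉ D) (hne : f₁ ≠ f₂) {u : V} (hu₁ : u ∈ kept T om f₁)
    (hu₂ : u ∈ kept T om f₂) : ∃ g ∈ D, om f₁ ∈ kept T om g ∧ om f₂ ∈ kept T om g := by
  obtain ⟨hus₁, huT₁⟩ := mem_kept.1 hu₁
  obtain ⟨-, huT₂⟩ := mem_kept.1 hu₂
  have hs₁S := h.om_mem_component hT hf₁
  have hs₂S := h.om_mem_component hT hf₂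
  have hs : om f₁ ≠ om f₂ := fun hs =>
    hne (h.eq_of_mem_of_om_mem hT hf₂ hu₂ huT₁ (hs ▸ h.mem f₁))
  obtain ⟨g, hg₁, hg₂⟩ := hT.exists_mem hs
  have hg : g ∈ D := by
    by_contra hg
    exact hs ((om_eq_of_notMem_componentEdges hg hg₁ hs₁S).symm.trans
      (om_eq_of_notMem_componentEdges hg hg₂ hs₂S))
  have homg : ¬ (om g = om f₁ ∨ om g = om f₂) := by
    intro homg
    obtain ⟨om', hom', hoff, hf₁', -⟩ := h.exists_rotation_three (i := f₁) (j := g) (k := f₂)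
      (by grind) ⟨huT₁, h.mem f₁, .inr rfl⟩ ⟨hg₁, hg₂, homg⟩ ⟨h.mem f₂, huT₂, .inl rfl⟩
    rw [Equiv.swap_apply_right] at hf₁'
    exact h.false_of_modify_one hT hom' g (by grind) hf₁ (h.mem f₁) (hf₁' ▸ hus₁.symm) hs₁S
  push Not at homg
  exact ⟨g, hg, mem_kept.2 ⟨homg.1.symm, hg₁⟩, mem_kept.2 ⟨homg.2.symm, hg₂⟩⟩

theorem om_notMem_component [Finite V] (hT : IsTripleCover T) (h : IsMaximalOmission T om a)
    {f₁ f₂ g : ι} (hf₁ : f₁ ∉ D) (hf₂ : f₂ ∉ D) (hne : f₁ ≠ f₂) {u : V} (hu₁ : u ∈ kept T om f₁)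
    (hu₂ : u ∈ kept T om f₂) (hg : g ∈ D) (hg₁ : om f₁ ∈ kept T om g)
    (hg₂ : om f₂ ∈ kept T om g) : om g ∉ S := by
  intro hgS
  have hcard := hT.card_kept h.mem
  have hs : om f₁ ≠ om f₂ := fun hs =>
    hne (h.eq_of_mem_of_om_mem hT hf₂ hu₂ (mem_kept.1 hu₁).2 (hs ▸ h.mem f₁))
  have hK := pair_eq_of_mem (hcard g) hg₁ hg₂ hs
  have hug : u ≠ om g := fun e => notMem_component_of_mem_kept hf₁ hu₁ (e ▸ hgS)
  obtain ⟨i, hui, hgi⟩ := hT.exists_mem hug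
  obtain ⟨χ₁, hχ₁, hcut₁, hz₁⟩ := h.exists_cut_of_exchange hT hf₁ hu₁ hg hg₁ hgS hui hgi
  obtain ⟨χ₂, hχ₂, hcut₂, hz₂⟩ := h.exists_cut_of_exchange hT hf₂ hu₂ hg hg₂ hgS hui hgi
  have hzs₁ := hz₁ _ hg₂ hs.symm
  have hzs₂ := hz₂ _ hg₁ hs
  rw [← sum_eq_zero_iff_uncut (hcard g), ← hK, Finset.sum_pair hs] at hcut₁ hcut₂
  -- Both colourings cut `g`, so their sum does not, and then by parity it does not cut `i` either.
  have huncut : ∀ j ∈ D, j ≠ i → Uncut (χ₁ + χ₂) (kept T om j) := fun j hj hji => by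
    obtain rfl | hjg := eq_or_ne j g
    · rw [← sum_eq_zero_iff_uncut (hcard j), ← hK, Finset.sum_pair hs]
      simp only [Pi.add_apply]
      have hone : ∀ c : ZMod 2, c ≠ 0 → c = 1 := by decide
      rw [add_add_add_comm, hone _ hcut₁, hone _ hcut₂, CharTwo.add_self_eq_zero]
    · intro p hp q hq
      simp [hχ₁ j hj hjg hji p hp q hq, hχ₂ j hj hjg hji p hp q hq]
  have huncut' : ∀ j ∈ D, Uncut (χ₁ + χ₂) (kept T om j) := fun j hj => by
    obtain rfl | hji := eq_or_ne j i
    · exact h.even.uncut_of_forall_ne hcard hj huncut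
    · exact huncut j hj hji
  have hconst : (χ₁ + χ₂) (om f₁) = (χ₁ + χ₂) (om g) :=
    ((hg hg₁).symm.trans hgS).eq_of_uncut fun j p hp hap =>
      huncut' j (mem_componentEdges_of_mem hp ((hg hg₁).trans hap))
  simp only [Pi.add_apply, hzs₂, ← hzs₁, add_left_inj] at hconst
  exact hcut₁ (by rw [hconst, CharTwo.add_self_eq_zero])

theorem exists_om_notMem [Finite V] (hT : IsTripleCover T) (h : IsMaximalOmission T om a)
    {f₁ f₂ : ι} (hf₁ : f₁ ∉ D) (hf₂ : f₂ ∉ D) (hne : f₁ ≠ f₂) {u : V} (hu₁ : u ∈ kept T om f₁)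
    (hu₂ : u ∈ kept T om f₂) :
    ∃ g ∈ D, om f₁ ∈ kept T om g ∧ om g ∉ S ∧ om g ∉ kept T om f₁ ∧ om g ∉ kept T om f₂ := by
  obtain ⟨g, hg, hg₁, hg₂⟩ := h.exists_mem_kept_om_om hT hf₁ hf₂ hne hu₁ hu₂
  have hz : ∀ f ∉ D, om f ∈ kept T om g → om g ∉ kept T om f := fun f hf hfg hgf =>
    hf (h.eq_of_mem_of_om_mem hT hf hgf (h.mem g) (mem_kept.1 hfg).2 ▸ hg)
  exact ⟨g, hg, hg₁, h.om_notMem_component hT hf₁ hf₂ hne hu₁ hu₂ hg hg₁ hg₂,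
    hz f₁ hf₁ hg₁, hz f₂ hf₂ hg₂⟩

theorem exists_isObstruction [Finite V] (hT : IsTripleCover T) (h : IsMaximalOmission T om a)
    {f : ι} (hf : f ∉ D) : ∃ f₂ g u u' v, IsObstruction T om a f f₂ g u u' v := by
  obtain ⟨u, u', huu', hK⟩ := Finset.card_eq_two.1 (hT.card_kept h.mem f)
  have hu : u ∈ kept T om f := by simp [hK]
  have hu' : u' ∈ kept T om f := by simp [hK]
  have huS := notMem_component_of_mem_kept hf hu
  obtain ⟨f₀, hf₀f, huf₀⟩ := h.even.exists_ne_mem hu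
  have hf₀ : f₀ ∉ D := fun hf₀ => huS (hf₀ huf₀)
  obtain ⟨g₀, -, -, hvS, hvf, -⟩ := h.exists_om_notMem hT hf hf₀ hf₀f.symm hu huf₀
  have huv : u ≠ om g₀ := fun e => hvf (e ▸ hu)
  obtain ⟨f₂, hf₂, huf₂, hvf₂⟩ := h.exists_notMem_mem_kept hT huS hvS huv
  have hff₂ : f ≠ f₂ := fun e => hvf (e ▸ hvf₂)
  obtain ⟨g, hg, hg₁, hzS, hz₁, hz₂⟩ := h.exists_om_notMem hT hf hf₂ hff₂ hu huf₂
  exact ⟨f₂, g, u, u', om g₀, hf, hf₂, hg, hu, hu', huu', huf₂, hvf₂, hvf, hg₁, hzS, hz₁, hz₂⟩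

theorem apply_eq_of_isObstruction [Finite V] (hT : IsTripleCover T)
    (h : IsMaximalOmission T om a) {f₁ f₂ g : ι} {u u' v : V}
    (ho : IsObstruction T om a f₁ f₂ g u u' v) {χ : V → ZMod 2}
    (hχ : ∀ i ∉ D, v ∈ kept T om i → Uncut χ (kept T om i)) : χ u = χ u' ∧ χ (om g) = χ u' := by
  have hvS := notMem_component_of_mem_kept ho.f₂_notMem ho.v_mem_f₂
  have hv : ∀ p ∉ S, v ≠ p → χ v = χ p := fun p hpS hvp => by
    obtain ⟨i, hi, hvi, hpi⟩ := h.exists_notMem_mem_kept hT hvS hpS hvp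
    exact hχ i hi hvi v hvi p hpi
  have hvu : χ v = χ u := hχ f₂ ho.f₂_notMem ho.v_mem_f₂ v ho.v_mem_f₂ u ho.u_mem_f₂
  have hvu' : χ v = χ u' := hv u' (notMem_component_of_mem_kept ho.f₁_notMem ho.u'_mem_f₁)
    fun e => ho.v_notMem_f₁ (e ▸ ho.u'_mem_f₁)
  have hvz : χ v = χ (om g) := hv (om g) ho.om_g_notMem fun e =>
    ho.om_g_notMem_f₂ (e ▸ ho.v_mem_f₂)
  exact ⟨hvu.symm.trans hvu', hvz.symm.trans hvu'⟩

theorem exists_cycle_of_isObstruction [Finite V] (hT : IsTripleCover T)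
    (h : IsMaximalOmission T om a) {f₁ f₂ g : ι} {u u' v : V}
    (ho : IsObstruction T om a f₁ f₂ g u u' v) :
    ∃ f k, f ∉ D ∧ {om g, u'} = kept T om f ∧ u ∈ T k ∧ om f ∈ T k ∧ [f₁, g, f, k].Nodup := by
  have hu'S := notMem_component_of_mem_kept ho.f₁_notMem ho.u'_mem_f₁
  have hzu' : om g ≠ u' := fun e => ho.om_g_notMem_f₁ (e ▸ ho.u'_mem_f₁)
  obtain ⟨f, hf, hzf, hu'f⟩ := h.exists_notMem_mem_kept hT ho.om_g_notMem hu'S hzu'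
  have hK := pair_eq_of_mem (hT.card_kept h.mem f) hzf hu'f hzu'
  have hsS := h.om_mem_component hT hf
  have hfg : f ≠ g := fun e => hf (e ▸ ho.g_mem)
  have hsg : om f ∉ T g := fun hsg =>
    hfg (h.eq_of_mem_of_om_mem hT hf hzf (h.mem g) hsg).symm
  obtain ⟨k, huk, hsk⟩ := hT.exists_mem (x := u) (y := om f) fun e =>
    notMem_component_of_mem_kept ho.f₁_notMem ho.u_mem_f₁ (e ▸ hsS)
  have hkf₁ : k ≠ f₁ := by
    rintro rfl
    exact hsg (om_eq_of_notMem_componentEdges ho.f₁_notMem hsk hsS ▸ (mem_kept.1 ho.om_f₁_mem).2)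
  have hkf : k ≠ f := by
    rintro rfl
    have huk' : u ∈ kept T om k := mem_kept.2
      ⟨fun e => notMem_component_of_mem_kept ho.f₁_notMem ho.u_mem_f₁ (e ▸ hsS), huk⟩
    rw [← hK, Finset.mem_insert, Finset.mem_singleton] at huk'
    exact huk'.elim (fun e => ho.om_g_notMem_f₁ (e ▸ ho.u_mem_f₁)) ho.u_ne
  have hf₁f : f₁ ≠ f := fun e => ho.om_g_notMem_f₁ (e ▸ hzf)
  have hf₁g : f₁ ≠ g := fun e => ho.f₁_notMem (e ▸ ho.g_mem)
  exact ⟨f, k, hf, hK, huk, hsk, by grind⟩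

theorem false_of_isObstruction_of_mem [Finite V] (hT : IsTripleCover T)
    (h : IsMaximalOmission T om a) {f₁ f₂ g f k : ι} {u u' v : V}
    (ho : IsObstruction T om a f₁ f₂ g u u' v) (hf : f ∉ D) (hK : {om g, u'} = kept T om f)
    (hk : k ∈ D) (huk : u ∈ T k) (hom' : IsEvenOmission T om')
    (hoff : ∀ t, t ∉ [f₁, g, f, k] → om' t = om t) (hf₁' : om' f₁ = u) (hg' : om' g = om f₁)
    (hf' : om' f = om g) (hk' : om' k = om f) : False := by
  have huS := notMem_component_of_mem_kept ho.f₁_notMem ho.u_mem_f₁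
  have hs₁S := h.om_mem_component hT ho.f₁_notMem
  have hsS := h.om_mem_component hT hf
  have hs₁ : om f₁ ∈ kept T om' f₁ := mem_kept.2 ⟨fun e => huS (hf₁' ▸ e ▸ hs₁S), h.mem f₁⟩
  have hs : om f ∈ kept T om' f :=
    mem_kept.2 ⟨fun e => ho.om_g_notMem (hf' ▸ e ▸ hsS), h.mem f⟩
  have hu'f : u' ∈ kept T om f := by simp [← hK]
  have hzu' : om g ≠ u' := fun e => ho.om_g_notMem_f₁ (e ▸ ho.u'_mem_f₁)
  refine h.false_of_uncut hT hom' (fun χ hχ => ?_) ho.f₁_notMem hs₁ hs₁S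
  obtain ⟨hu, hz⟩ := h.apply_eq_of_isObstruction hT ho (χ := χ) fun i hi hvi =>
    kept_congr (T := T) (hoff i (by grind [IsObstruction])) ▸ hχ i
  have hχs₁ : χ (om f₁) = χ u' := hχ f₁ _ hs₁ _
    (mem_kept.2 ⟨hf₁' ▸ ho.u_ne.symm, (mem_kept.1 ho.u'_mem_f₁).2⟩)
  have hχs : χ (om f) = χ u' := hχ f _ hs _ (mem_kept.2 ⟨hf' ▸ hzu'.symm, (mem_kept.1 hu'f).2⟩)
  have hχg : ∀ p ∈ kept T om g, χ p = χ u' := fun p hp => by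
    obtain rfl | hps₁ := eq_or_ne p (om f₁)
    · exact hχs₁
    · exact (hχ g p (mem_kept.2 ⟨hg' ▸ hps₁, (mem_kept.1 hp).2⟩) (om g)
        (mem_kept.2 ⟨hg' ▸ (mem_kept.1 ho.om_f₁_mem).1.symm, h.mem g⟩)).trans hz
  have hχk : ∀ p ∈ kept T om k, χ p = χ u' := fun p hp => by
    obtain rfl | hps := eq_or_ne p (om f)
    · exact hχs
    · exact (hχ k p (mem_kept.2 ⟨hk' ▸ hps, (mem_kept.1 hp).2⟩) u
        (mem_kept.2 ⟨fun e => huS (e ▸ hk' ▸ hsS), huk⟩)).trans hu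
  intro i hi
  obtain rfl | hig := eq_or_ne i g
  · exact fun p hp q hq => (hχg p hp).trans (hχg q hq).symm
  obtain rfl | hik := eq_or_ne i k
  · exact fun p hp q hq => (hχk p hp).trans (hχk q hq).symm
  exact kept_congr (T := T) (hoff i (by grind [IsObstruction])) ▸ hχ i

theorem mem_componentEdges [Finite V] (hT : IsTripleCover T) (h : IsMaximalOmission T om a)
    (i : ι) : i ∈ D := by
  by_contra hi
  obtain ⟨f₂, g, u, u', v, ho⟩ := h.exists_isObstruction hT hi
  obtain ⟨f, k, hf, hK, huk, hsk, hnd⟩ := h.exists_cycle_of_isObstruction hT ho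
  have huS := notMem_component_of_mem_kept hi ho.u_mem_f₁
  have hsS := h.om_mem_component hT hf
  have hzf : om g ∈ T f := (mem_kept.1 (hK ▸ Finset.mem_insert_self _ _)).2
  obtain ⟨hus, hui⟩ := mem_kept.1 ho.u_mem_f₁
  obtain ⟨om', hom', hoff, hi', hg', hf', hk'⟩ := h.exists_rotation_four hnd
    ⟨hui, h.mem i, .inr rfl⟩ ⟨(mem_kept.1 ho.om_f₁_mem).2, h.mem g, .inr rfl⟩
    ⟨hzf, h.mem f, .inr rfl⟩ (canToggle_of_notMem_of_mem huk hsk huS hsS).symm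
  rw [Equiv.swap_apply_right] at hi' hg' hf'
  by_cases hk : k ∈ D
  · rw [om_eq_of_mem_componentEdges hk huk huS, Equiv.swap_apply_right] at hk'
    exact h.false_of_isObstruction_of_mem hT ho hf hK hk huk hom' hoff hi' hg' hf' hk'
  · exact h.false_of_modify_one hT hom' g (by grind) hi (h.mem i) (hi' ▸ hus.symm)
      (h.om_mem_component hT hi)

end IsMaximalOmission

end MaximalOmission

theorem isTripleCover_get_toList {V : Type} [DecidableEq V] {E : Multiset (Finset V)}
    (hE : IsCoveringHypergraph E 2 3) : IsTripleCover E.toList.get where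
  card_eq i := hE.2.1 _ (Multiset.mem_toList.1 (List.get_mem _ i))
  exists_mem x y hxy := by
    obtain ⟨e, he, hxye⟩ := hE.2.2 {x, y} (Finset.card_pair hxy)
    obtain ⟨i, rfl⟩ := List.mem_iff_get.1 (Multiset.mem_toList.2 he)
    rw [Finset.insert_subset_iff, Finset.singleton_subset_iff] at hxye
    exact ⟨i, hxye⟩

theorem map_get_toList {α : Type*} (s : Multiset α) : Finset.univ.val.map s.toList.get = s := by
  rw [Fin.univ_val_map, List.ofFn_get, Multiset.coe_toList]

theorem IsTripleCover.isEulerian {V : Type} [Finite V] {ι : Type*} [Fintype ι] [Nontrivial ι]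
    {T : ι → Finset V} (hT : IsTripleCover T) : IsEulerian (Finset.univ.val.map T) := by
  classical
  obtain ⟨i⟩ : Nonempty ι := inferInstance
  obtain ⟨x, -⟩ : (T i).Nonempty := Finset.card_pos.1 (by simp [hT.card_eq i])
  have : Nonempty V := ⟨x⟩
  obtain ⟨om, a, h⟩ := exists_isMaximalOmission (exists_isEvenOmission hT)
  obtain ⟨u, L, hwalk, hnd, hall⟩ := exists_closed_trail (hT.card_kept h.mem) h.even
    fun i j p hp q hq => (h.mem_componentEdges hT i hp).symm.trans (h.mem_componentEdges hT j hq)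
  exact isEulerian_of_isWalk (hwalk.mono fun i => Finset.erase_subset _ _) hnd hall

end TripleCover

/-- Every covering 3-hypergraph (i.e. 2-covering 3-hypergraph) with at least two edges
is eulerian. -/
theorem covering3Hypergraph_eulerian {V : Type} [Fintype V] [DecidableEq V]
    (E : Multiset (Finset V)) (hH : IsCoveringHypergraph E 2 3)
    (h2 : 2 ≤ Multiset.card E) :
    IsEulerian E := by
  have : Nontrivial (Fin E.toList.length) := by
    rwa [Fin.nontrivial_iff_two_le, Multiset.length_toList]
  rw [← TripleCover.map_get_toList E]
  exact (TripleCover.isTripleCover_get_toList hH).isEulerian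
end

section
/- Let k ≥ 3 and let H be a covering k-hypergraph, i.e., a (k−1)-covering k-hypergraph. Then H is eulerian if and only if H has at least two edges. -/
/-!
Fixing `k - 3` vertices of an edge and passing to their link reduces the theorem to a family of
triples covering all pairs of vertices. There, choose from each triple a pair to be traversed, or
skip the triple, so that the chosen pairs form a connected multigraph with even degrees, a tour, and
let the tour use as many triples as possible. If it uses all of them, an Euler trail of the
multigraph is an Euler tour of the hypergraph.

Suppose that a triple `f` is skipped. Switching the choices along a triangle, digon or quadrilateral
through `f` would often yield a tour with more triples, so the switch must disconnect the
multigraph, and hence the multigraph has many edge cuts of size two. As every edge cut of an even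
multigraph has even size, these cuts are hardly compatible with each other, and it follows that
each vertex outside of `f` forms, with some vertex of `f`, a pair that is traversed in every triple
containing it. A double count of such pairs shows that there are no vertices outside of `f`; then
all triples coincide and the switch along a digon always succeeds.
-/

open Finset
open scoped symmDiff

section Crosses

variable {V : Type*} {X : Set V}

/-- `s` crosses `X` if it has vertices on both sides of the bipartition `X`, `Xᶜ`. -/
def Crosses (s : Finset V) (X : Set V) : Prop :=
  ∃ p ∈ s, ∃ q ∈ s, p ∈ X ∧ q ∉ X

@[simp]
theorem not_crosses_empty : ¬ Crosses ∅ X := by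
  simp [Crosses]

theorem crosses_pair [DecidableEq V] {p q : V} : Crosses {p, q} X ↔ ¬ (p ∈ X ↔ q ∈ X) := by
  simp only [Crosses, mem_insert, mem_singleton, exists_eq_or_imp, exists_eq_left]
  tauto

theorem eq_empty_or_eq_pair [DecidableEq V] {s t : Finset V} (ht : #t = 3) (hst : s ⊆ t)
    (hs : Even #s) : s = ∅ ∨ ∃ p q, p ≠ q ∧ s = {p, q} := by
  have hle := card_le_card hst
  obtain h | h : #s = 0 ∨ #s = 2 := by grind
  · exact .inl (card_eq_zero.1 h)
  · exact .inr (card_eq_two.1 h)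

open Classical in
theorem crosses_iff_odd {s t : Finset V} (ht : #t = 3) (hst : s ⊆ t) (hs : Even #s) :
    Crosses s X ↔ Odd #{v ∈ s | v ∈ X} := by
  obtain rfl | ⟨p, q, hpq, rfl⟩ := eq_empty_or_eq_pair ht hst hs
  · simp
  · by_cases hp : p ∈ X <;> by_cases hq : q ∈ X <;>
      simp [crosses_pair, filter_insert, filter_singleton, hp, hq, hpq]

theorem even_card_symmDiff_iff [DecidableEq V] (s t : Finset V) :
    Even #(s ∆ t) ↔ (Even #s ↔ Even #t) := by
  have hst := card_sdiff_add_card_inter s t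
  have hts := card_sdiff_add_card_inter t s
  rw [symmDiff, sup_eq_union, card_union_of_disjoint disjoint_sdiff_sdiff, ← Nat.even_add, ← hst,
    ← hts, inter_comm t s]
  grind

theorem crosses_symmDiff [DecidableEq V] {s s' t : Finset V} (ht : #t = 3) (hst : s ⊆ t)
    (hs : Even #s) (hst' : s' ⊆ t) (hs' : Even #s') :
    Crosses (s ∆ s') X ↔ ¬ (Crosses s X ↔ Crosses s' X) := by
  classical
  have hsub : s ∆ s' ⊆ t :=
    symmDiff_le_sup.trans (union_subset hst hst')
  have hfilter : {v ∈ s ∆ s' | v ∈ X} = {v ∈ s | v ∈ X} ∆ {v ∈ s' | v ∈ X} := by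
    grind [mem_symmDiff]
  rw [crosses_iff_odd ht hsub ((even_card_symmDiff_iff s s').2 (iff_of_true hs hs')),
    crosses_iff_odd ht hst hs, crosses_iff_odd ht hst' hs', hfilter, ← Nat.not_even_iff_odd,
    even_card_symmDiff_iff]
  grind

end Crosses

section Tour

variable {V ι : Type*} {t c d : ι → Finset V} {X : Set V}

/-- The vertices visited by a selection `c` of a set of vertices from each edge. -/
def support (c : ι → Finset V) : Set V :=
  {v | ∃ i, v ∈ c i}

/-- The multigraph formed by the sets `c i` is connected, apart from isolated vertices:
no bipartition of the visited vertices is uncrossed. -/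
def IsConnectedSelection (c : ι → Finset V) : Prop :=
  ∀ X : Set V, (∀ i, ¬ Crosses (c i) X) → ∀ p ∈ support c, ∀ q ∈ support c, p ∈ X → q ∈ X

variable [DecidableEq V]

theorem left_mem_support {p q : V} {i : ι} (h : c i = {p, q}) : p ∈ support c :=
  ⟨i, by simp [h]⟩

theorem right_mem_support {p q : V} {i : ι} (h : c i = {p, q}) : q ∈ support c :=
  ⟨i, by simp [h]⟩

/-- The number of edges on which a selection is nontrivial. -/
def numUsed [Fintype ι] (c : ι → Finset V) : ℕ :=
  #{i | c i ≠ ∅}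

theorem numUsed_symmDiff [Fintype ι] (c d : ι → Finset V) :
    numUsed (c ∆ d) + #{i | c i ≠ ∅ ∧ c i = d i} = numUsed c + #{i | c i = ∅ ∧ d i ≠ ∅} := by
  simp only [numUsed, card_filter, ← sum_add_distrib]
  refine sum_congr rfl fun i _ => ?_
  have hi : (c ∆ d) i = ∅ ↔ c i = d i := symmDiff_eq_bot
  grind

theorem numUsed_le_numUsed_symmDiff [Fintype ι] {f k : ι} (hf : c f = ∅) (hdf : d f ≠ ∅)
    (hne : ∀ i ≠ k, c i ≠ ∅ → c i ≠ d i) : numUsed c ≤ numUsed (c ∆ d) := by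
  have hlost : #{i | c i ≠ ∅ ∧ c i = d i} ≤ 1 := by
    refine (card_le_card fun i hi => ?_).trans (card_singleton k).le
    obtain ⟨hci, hcd⟩ := (mem_filter.1 hi).2
    by_contra hik
    exact hne i (by simpa using hik) hci hcd
  have hgain : 0 < #{i | c i = ∅ ∧ d i ≠ ∅} := card_pos.2 ⟨f, by simp [hf, hdf]⟩
  have := numUsed_symmDiff c d
  omega

/-- A selection of an even number of vertices from each edge `t i` such that every vertex is
selected an even number of times. For edges of size three, each `c i` is empty (the edge is
skipped) or a pair (the edge is traversed between its two vertices), so `c` is a multigraph with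
even degrees. -/
structure IsEvenSelection [Fintype ι] (t c : ι → Finset V) : Prop where
  subset : ∀ i, c i ⊆ t i
  even_card : ∀ i, Even #(c i)
  even_degree : ∀ v, Even #{i | v ∈ c i}

/-- A connected even selection; it encodes a closed trail through the edges on which it is
nonempty. -/
structure IsTour [Fintype ι] (t c : ι → Finset V) : Prop extends IsEvenSelection t c where
  connected : IsConnectedSelection c

/-- A tour using as many edges as possible. -/
structure IsMaxTour [Fintype ι] (t c : ι → Finset V) : Prop extends IsTour t c where
  numUsed_le : ∀ c', IsTour t c' → numUsed c' ≤ numUsed c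

variable [Fintype ι]

theorem IsEvenSelection.symmDiff (hc : IsEvenSelection t c) (hd : IsEvenSelection t d) :
    IsEvenSelection t (c ∆ d) where
  subset i := symmDiff_le_sup.trans (union_subset (hc.subset i) (hd.subset i))
  even_card i :=
    (even_card_symmDiff_iff _ _).2 (iff_of_true (hc.even_card i) (hd.even_card i))
  even_degree v := by
    classical
    have h : ({i | v ∈ (c ∆ d) i} : Finset ι) =
        ({i | v ∈ c i} : Finset ι) ∆ ({i | v ∈ d i} : Finset ι) := by
      ext i
      simp [mem_symmDiff]
    rw [h]
    exact (even_card_symmDiff_iff _ _).2 (iff_of_true (hc.even_degree v) (hd.even_degree v))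

open Classical in
theorem IsEvenSelection.even_card_crosses (ht : ∀ i, #(t i) = 3) (hc : IsEvenSelection t c)
    (X : Set V) : Even #{i | Crosses (c i) X} := by
  have hodd : ∀ i, Crosses (c i) X ↔ Odd #{v ∈ c i | v ∈ X} := fun i =>
    crosses_iff_odd (ht i) (hc.subset i) (hc.even_card i)
  simp only [hodd, ← even_sum_iff_even_card_odd]
  have hcount : ∑ i, #{v ∈ c i | v ∈ X} =
      ∑ v ∈ univ.biUnion c with v ∈ X, #{i | v ∈ c i} := by
    refine Eq.trans ?_ (sum_card_bipartiteAbove_eq_sum_card_bipartiteBelow fun i v => v ∈ c i)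
    refine sum_congr rfl fun i _ => congrArg card ?_
    ext v
    simp only [bipartiteAbove, mem_filter, mem_biUnion, mem_univ, true_and]
    exact ⟨fun h => ⟨⟨⟨i, h.1⟩, h.2⟩, h.1⟩, fun h => ⟨h.2, h.1.2⟩⟩
  rw [hcount]
  exact even_sum _ fun v _ => hc.even_degree v

theorem IsEvenSelection.not_crosses_of_forall_ne (ht : ∀ i, #(t i) = 3)
    (hc : IsEvenSelection t c) {n : ι} (h : ∀ i, i ≠ n → ¬ Crosses (c i) X) (i : ι) :
    ¬ Crosses (c i) X := by
  classical
  by_contra hi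
  obtain rfl : i = n := by
    by_contra hin
    exact h i hin hi
  have hone : ({j | Crosses (c j) X} : Finset ι) = {i} := by
    ext j
    simp only [mem_filter, mem_univ, true_and, mem_singleton]
    exact ⟨fun hj => by_contra fun hji => h j hji hj, fun hj => hj ▸ hi⟩
  have heven := hc.even_card_crosses ht X
  rw [hone, card_singleton] at heven
  exact Nat.not_even_one heven

theorem IsEvenSelection.eq_empty_or_pair (ht : ∀ i, #(t i) = 3) (hc : IsEvenSelection t c) (i : ι) :
    c i = ∅ ∨ ∃ p q, p ≠ q ∧ c i = {p, q} :=
  eq_empty_or_eq_pair (ht i) (hc.subset i) (hc.even_card i)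

theorem IsTour.mem_of_forall_not_crosses (hc : IsTour t c) (h : ∀ i, ¬ Crosses (c i) X) {p q : V}
    (hp : p ∈ support c) (hq : q ∈ support c) : p ∈ X → q ∈ X :=
  hc.connected X h p hp q hq

theorem IsTour.symmDiff_or_exists_cut (ht : ∀ i, #(t i) = 3) (hc : IsTour t c) (hd : IsTour t d)
    (hmeet : (support c ∩ support d).Nonempty) :
    IsTour t (c ∆ d) ∨
      ∃ X, (∃ i, Crosses (d i) X) ∧ ∀ i, Crosses (c i) X ↔ Crosses (d i) X := by
  by_contra! hcon
  refine hcon.1 ⟨hc.toIsEvenSelection.symmDiff hd.toIsEvenSelection, fun X hX p hp q hq hpX => ?_⟩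
  have hcd : ∀ i, Crosses (c i) X ↔ Crosses (d i) X := by
    intro i
    have := hX i
    rwa [Pi.symmDiff_apply, crosses_symmDiff (ht i) (hc.subset i) (hc.even_card i) (hd.subset i)
      (hd.even_card i), not_not] at this
  have hdX : ∀ i, ¬ Crosses (d i) X := by
    intro i hi
    obtain ⟨j, hj⟩ := hcon.2 X ⟨i, hi⟩
    grind
  have hcX : ∀ i, ¬ Crosses (c i) X := fun i => (hcd i).not.2 (hdX i)
  have hsub : support (c ∆ d) ⊆ support c ∪ support d := by
    rintro v ⟨i, hi⟩
    rw [Pi.symmDiff_apply, mem_symmDiff] at hi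
    exact hi.imp (fun h => ⟨i, h.1⟩) fun h => ⟨i, h.1⟩
  obtain ⟨z, hzc, hzd⟩ := hmeet
  have hzX : z ∈ X := (hsub hp).elim (hc.mem_of_forall_not_crosses hcX · hzc hpX)
    (hd.mem_of_forall_not_crosses hdX · hzd hpX)
  exact (hsub hq).elim (hc.mem_of_forall_not_crosses hcX hzc · hzX)
    (hd.mem_of_forall_not_crosses hdX hzd · hzX)

theorem IsMaxTour.exists_cut (ht : ∀ i, #(t i) = 3) (hc : IsMaxTour t c) (hd : IsTour t d)
    (hmeet : (support c ∩ support d).Nonempty)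
    (hgain : #{i | c i ≠ ∅ ∧ c i = d i} < #{i | c i = ∅ ∧ d i ≠ ∅}) :
    ∃ X, (∃ i, Crosses (d i) X) ∧ ∀ i, Crosses (c i) X ↔ Crosses (d i) X := by
  refine (hc.toIsTour.symmDiff_or_exists_cut ht hd hmeet).resolve_left fun h => ?_
  have hle := hc.numUsed_le _ h
  have heq := numUsed_symmDiff c d
  omega

theorem IsMaxTour.of_numUsed_le (hc : IsMaxTour t c) {c' : ι → Finset V} (hc' : IsTour t c')
    (h : numUsed c ≤ numUsed c') : IsMaxTour t c' :=
  ⟨hc', fun c'' h'' => (hc.numUsed_le c'' h'').trans h⟩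

end Tour

section Trail

variable {V ι : Type*} [DecidableEq V] {t c : ι → Finset V} {X : Set V} {u x w p : V}
  {L L' : List ι}

/-- `Trail c u w L` says that the pairs `c i`, for `i` running through `L`, are the successive
edges of a walk from `u` to `w`. -/
inductive Trail (c : ι → Finset V) : V → V → List ι → Prop
  | nil (u : V) : Trail c u u []
  | cons {u x w : V} {i : ι} {L : List ι} (hi : c i = {u, x}) (hux : u ≠ x) (h : Trail c x w L) :
      Trail c u w (i :: L)

namespace Trail

theorem append (h : Trail c u x L) (h' : Trail c x w L') : Trail c u w (L ++ L') := by
  induction h with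
  | nil => exact h'
  | cons hi hux _ ih => exact .cons hi hux (ih h')

theorem exists_split_at {i : ι} (h : Trail c u w L) (hi : i ∈ L) (hp : p ∈ c i) :
    ∃ L₁ L₂, L = L₁ ++ L₂ ∧ Trail c u p L₁ ∧ Trail c p w L₂ := by
  induction h with
  | nil => cases hi
  | @cons u x w j L hj hux h ih =>
    obtain rfl | hi := List.mem_cons.1 hi
    · obtain rfl | rfl : p = u ∨ p = x := by simpa [hj] using hp
      · exact ⟨[], i :: L, rfl, .nil p, .cons hj hux h⟩
      · exact ⟨[i], L, rfl, .cons hj hux (.nil p), h⟩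
    · obtain ⟨L₁, L₂, rfl, h₁, h₂⟩ := ih hi
      exact ⟨j :: L₁, L₂, rfl, .cons hj hux h₁, h₂⟩

theorem card_eq_two {i : ι} (h : Trail c u w L) (hi : i ∈ L) : #(c i) = 2 := by
  induction h with
  | nil => cases hi
  | cons hj hux _ ih =>
    obtain rfl | hi := List.mem_cons.1 hi
    · rw [hj, card_pair hux]
    · exact ih hi

theorem even_countP_iff (h : Trail c u w L) (v : V) :
    Even (L.countP (v ∈ c ·)) ↔ (v = u ↔ v = w) := by
  induction h with
  | nil => simp
  | cons hi hux _ ih => grind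

theorem mem_iff_mem (h : Trail c u w L) (hX : ∀ i ∈ L, ¬ Crosses (c i) X) : u ∈ X ↔ w ∈ X := by
  induction h with
  | nil => rfl
  | cons hi _ _ ih => grind [crosses_pair]

end Trail

variable [Fintype ι]

theorem card_filter_eq_countP (hL : L.Nodup) {P : ι → Prop} [DecidablePred P]
    (hP : ∀ i, P i → i ∈ L) : #{i | P i} = L.countP (P ·) := by
  classical
  rw [List.countP_eq_length_filter, ← List.toFinset_card_of_nodup (hL.filter _)]
  congr 1
  ext i
  simpa using hP i

theorem Trail.isTour (h : Trail c u u L) (hL : L.Nodup) (hsub : ∀ i, c i ⊆ t i)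
    (hempty : ∀ i, i ∉ L → c i = ∅) : IsTour t c where
  subset := hsub
  even_card i := by
    by_cases hi : i ∈ L
    · simp [h.card_eq_two hi]
    · simp [hempty i hi]
  even_degree v := by
    rw [card_filter_eq_countP hL fun i hv => by_contra fun hi => by simp [hempty i hi] at hv]
    simp [h.even_countP_iff]
  connected X hX p hp q hq hpX := by
    have hu : ∀ v ∈ support c, u ∈ X ↔ v ∈ X := by
      rintro v ⟨i, hv⟩
      have hi : i ∈ L := by_contra fun hi => by simp [hempty i hi] at hv
      obtain ⟨L₁, L₂, -, h₁, -⟩ := h.exists_split_at hi hv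
      exact h₁.mem_iff_mem fun j _ => hX j
    exact (hu q hq).1 ((hu p hp).2 hpX)

end Trail

section Polygon

variable {V ι : Type*} [DecidableEq V] [Fintype ι] {t : ι → Finset V} {i j k l : ι} {p q r s : V}

theorem exists_digon_tour (hij : i ≠ j) (hpq : p ≠ q) (hpi : p ∈ t i) (hqi : q ∈ t i)
    (hpj : p ∈ t j) (hqj : q ∈ t j) :
    ∃ d, IsTour t d ∧ d i = {p, q} ∧ d j = {q, p} ∧ ∀ n, n ≠ i → n ≠ j → d n = ∅ := by
  classical
  let d : ι → Finset V := fun n => if n = i then {p, q} else if n = j then {q, p} else ∅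
  have hi : d i = {p, q} := if_pos rfl
  have hj : d j = {q, p} := by grind
  have hout : ∀ n, n ≠ i → n ≠ j → d n = ∅ := by grind
  have hd : Trail d p p [i, j] := .cons hi hpq (.cons hj hpq.symm (.nil p))
  exact ⟨d, hd.isTour (by grind) (by grind) (by grind), hi, hj, hout⟩

theorem exists_triangle_tour (hij : i ≠ j) (hik : i ≠ k) (hjk : j ≠ k) (hpq : p ≠ q) (hqr : q ≠ r)
    (hpr : p ≠ r) (hpi : p ∈ t i) (hqi : q ∈ t i) (hqj : q ∈ t j) (hrj : r ∈ t j)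
    (hpk : p ∈ t k) (hrk : r ∈ t k) :
    ∃ d, IsTour t d ∧ d i = {p, q} ∧ d j = {q, r} ∧ d k = {r, p} ∧
      ∀ n, n ≠ i → n ≠ j → n ≠ k → d n = ∅ := by
  classical
  let d : ι → Finset V := fun n =>
    if n = i then {p, q} else if n = j then {q, r} else if n = k then {r, p} else ∅
  have hi : d i = {p, q} := if_pos rfl
  have hj : d j = {q, r} := by grind
  have hk : d k = {r, p} := by grind
  have hout : ∀ n, n ≠ i → n ≠ j → n ≠ k → d n = ∅ := by grind
  have hd : Trail d p p [i, j, k] := .cons hi hpq (.cons hj hqr (.cons hk hpr.symm (.nil p)))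
  exact ⟨d, hd.isTour (by grind) (by grind) (by grind), hi, hj, hk, hout⟩

theorem exists_quadrilateral_tour (hijkl : [i, j, k, l].Nodup) (hpqrs : [p, q, r, s].Nodup)
    (hpi : p ∈ t i) (hqi : q ∈ t i) (hqj : q ∈ t j) (hrj : r ∈ t j) (hrk : r ∈ t k)
    (hsk : s ∈ t k) (hpl : p ∈ t l) (hsl : s ∈ t l) :
    ∃ d, IsTour t d ∧ d i = {p, q} ∧ d j = {q, r} ∧ d k = {r, s} ∧ d l = {s, p} ∧
      ∀ n, n ≠ i → n ≠ j → n ≠ k → n ≠ l → d n = ∅ := by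
  classical
  let d : ι → Finset V := fun n => if n = i then {p, q} else if n = j then {q, r} else
    if n = k then {r, s} else if n = l then {s, p} else ∅
  have hi : d i = {p, q} := if_pos rfl
  have hj : d j = {q, r} := by grind
  have hk : d k = {r, s} := by grind
  have hl : d l = {s, p} := by grind
  have hout : ∀ n, n ≠ i → n ≠ j → n ≠ k → n ≠ l → d n = ∅ := by grind
  have hd : Trail d p p [i, j, k, l] := .cons hi (by grind) (.cons hj (by grind)
    (.cons hk (by grind) (.cons hl (by grind) (.nil p))))
  exact ⟨d, hd.isTour hijkl (by grind) (by grind), hi, hj, hk, hl, hout⟩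

end Polygon

section Cut

variable {V ι : Type*} {t c : ι → Finset V} {X : Set V} {f i j n : ι} {p q r : V}

theorem crosses_compl {s : Finset V} : Crosses s Xᶜ ↔ Crosses s X := by
  grind [Crosses]

/-- `X` determines an edge cut of size two of the multigraph `c`: it is crossed exactly by the
edges `i` and `j`. -/
def IsTwoCut (c : ι → Finset V) (X : Set V) (i j : ι) : Prop :=
  ∀ n, Crosses (c n) X ↔ n = i ∨ n = j

theorem IsTwoCut.symm (h : IsTwoCut c X i j) : IsTwoCut c X j i := fun n => by
  rw [h n, or_comm]

theorem IsTwoCut.ne_empty (h : IsTwoCut c X i j) : c i ≠ ∅ := fun hi => by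
  simpa [hi] using h i

variable [DecidableEq V]

theorem IsTwoCut.mem_iff_of_ne (h : IsTwoCut c X i j) (hni : n ≠ i) (hnj : n ≠ j)
    (hn : c n = {p, q}) : p ∈ X ↔ q ∈ X := by
  have hX := (h n).not.2 (not_or.2 ⟨hni, hnj⟩)
  rwa [hn, crosses_pair, not_not] at hX

theorem IsTwoCut.not_mem_iff (h : IsTwoCut c X i j) (hi : c i = {p, q}) :
    ¬ (p ∈ X ↔ q ∈ X) := by
  have hX := (h i).2 (.inl rfl)
  rwa [hi, crosses_pair] at hX

theorem exists_eq_insert_pair {s : Finset V} (hs : #s = 3) (hp : p ∈ s) (hq : q ∈ s)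
    (hpq : p ≠ q) : ∃ x, x ≠ p ∧ x ≠ q ∧ s = {p, q, x} := by
  obtain ⟨x, hx⟩ : ∃ x, s \ {p, q} = {x} := by
    rw [← card_eq_one, card_sdiff_of_subset (by grind), hs, card_pair hpq]
  have hmem : ∀ y, y ∈ s ∧ y ∉ ({p, q} : Finset V) ↔ y = x := fun y => by
    rw [← mem_sdiff, hx, mem_singleton]
  have hxs := (hmem x).2 rfl
  exact ⟨x, by grind, by grind, by grind⟩

theorem exists_twoCut_of_triangle {d : ι → Finset V} (hdf : d f = {p, q}) (hdj : d j = {q, r})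
    (hdi : d i = {r, p}) (hout : ∀ n, n ≠ f → n ≠ j → n ≠ i → d n = ∅) (hf : c f = ∅)
    (hX : ∃ n, Crosses (d n) X) (hcd : ∀ n, Crosses (c n) X ↔ Crosses (d n) X) :
    ∃ Y, IsTwoCut c Y i j ∧ r ∈ Y ∧ p ∉ Y ∧ q ∉ Y := by
  have hpq : p ∈ X ↔ q ∈ X := by
    simpa [hf, hdf, crosses_pair] using hcd f
  have hdX : ∀ n, Crosses (d n) X → (n = i ∨ n = j) ∧ ¬ (p ∈ X ↔ r ∈ X) := by
    intro n hn
    obtain rfl | rfl | rfl | hdn : n = f ∨ n = j ∨ n = i ∨ d n = ∅ := by grind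
    · rw [hdf, crosses_pair] at hn; tauto
    · rw [hdj, crosses_pair] at hn; tauto
    · rw [hdi, crosses_pair] at hn; tauto
    · simp [hdn] at hn
  obtain ⟨m, hm⟩ := hX
  have hpr := (hdX m hm).2
  have hcut : IsTwoCut c X i j := by
    refine fun n => (hcd n).trans ⟨fun hn => (hdX n hn).1, ?_⟩
    rintro (rfl | rfl)
    · rw [hdi, crosses_pair]; tauto
    · rw [hdj, crosses_pair]; tauto
  by_cases hr : r ∈ X
  · exact ⟨X, hcut, hr, by tauto, by tauto⟩
  · refine ⟨Xᶜ, fun n => crosses_compl.trans (hcut n), hr, ?_, ?_⟩ <;>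
      simp only [Set.mem_compl_iff] <;> tauto

variable [Fintype ι]

theorem IsEvenSelection.eq_pair_or_eq_pair (ht : ∀ i, #(t i) = 3) (hc : IsEvenSelection t c)
    (hp : p ∈ t i) (hq : q ∈ t i) (hpq : p ≠ q) (hne : c i ≠ ∅) (hipq : c i ≠ {p, q}) :
    ∃ x, x ≠ p ∧ x ≠ q ∧ t i = {p, q, x} ∧ (c i = {p, x} ∨ c i = {q, x}) := by
  obtain ⟨x, hxp, hxq, hti⟩ := exists_eq_insert_pair (ht i) hp hq hpq
  obtain ⟨y, z, hyz, hci⟩ := (hc.eq_empty_or_pair ht i).resolve_left hne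
  have hsub := hc.subset i
  rw [hci, hti, insert_subset_iff, singleton_subset_iff] at hsub
  simp only [mem_insert, mem_singleton] at hsub
  refine ⟨x, hxp, hxq, hti, ?_⟩
  grind [pair_comm]

theorem IsEvenSelection.mem_or_mem (ht : ∀ i, #(t i) = 3) (hc : IsEvenSelection t c)
    (hp : p ∈ t i) (hq : q ∈ t i) (hpq : p ≠ q) (hne : c i ≠ ∅) :
    p ∈ c i ∨ q ∈ c i := by
  by_cases hipq : c i = {p, q}
  · simp [hipq]
  · obtain ⟨x, -, -, -, h | h⟩ := hc.eq_pair_or_eq_pair ht hp hq hpq hne hipq <;> simp [h]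

theorem IsMaxTour.exists_cut_of_forall_not_lost (ht : ∀ i, #(t i) = 3) (hc : IsMaxTour t c)
    {d : ι → Finset V} (hd : IsTour t d) (hmeet : (support c ∩ support d).Nonempty)
    (hf : c f = ∅) (hdf : d f ≠ ∅) (hlost : ∀ n, c n ≠ ∅ → c n ≠ d n) :
    ∃ X, (∃ i, Crosses (d i) X) ∧ ∀ i, Crosses (c i) X ↔ Crosses (d i) X := by
  refine hc.exists_cut ht hd hmeet ?_
  rw [filter_false_of_mem fun n _ h => hlost n h.1 h.2, card_empty, card_pos]
  exact ⟨f, by simp [hf, hdf]⟩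

end Cut

section Stuck

variable {V ι : Type*} [DecidableEq V] {t c : ι → Finset V} {f i j k : ι} {p q r v w u x d : V}

/-- The edge `i` contains `p` and `q`, but `c` does not traverse it between these two vertices. -/
def IsDetour (t c : ι → Finset V) (p q : V) (i : ι) : Prop :=
  p ∈ t i ∧ q ∈ t i ∧ c i ≠ {p, q}

/-- All edges containing `p` and `q` are traversed between these two vertices. -/
def IsForced (t c : ι → Finset V) (p q : V) : Prop :=
  ∀ i, ¬ IsDetour t c p q i

theorem IsDetour.symm (h : IsDetour t c p q i) : IsDetour t c q p i :=
  ⟨h.2.1, h.1, pair_comm q p ▸ h.2.2⟩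

theorem IsForced.eq_pair (h : IsForced t c p q) (hp : p ∈ t i) (hq : q ∈ t i) : c i = {p, q} :=
  by_contra fun hne => h i ⟨hp, hq, hne⟩

theorem not_isForced_iff : ¬ IsForced t c p q ↔ ∃ i, IsDetour t c p q i := by
  simp [IsForced]

variable [Fintype ι]

/-- A hypothetical obstruction in a covering 3-hypergraph with edges `t i`: a maximum tour `c`,
nontrivial, that skips the edge `f`. -/
structure IsStuck (t c : ι → Finset V) (f : ι) : Prop where
  card_eq_three : ∀ i, #(t i) = 3
  cover : ∀ p q, p ≠ q → ∃ i, p ∈ t i ∧ q ∈ t i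
  isMaxTour : IsMaxTour t c
  skipped : c f = ∅
  nonempty : (support c).Nonempty

namespace IsStuck

theorem isEvenSelection (S : IsStuck t c f) : IsEvenSelection t c :=
  S.isMaxTour.toIsEvenSelection

theorem not_crosses_of_forall_ne (S : IsStuck t c f) {X : Set V}
    (h : ∀ i, i ≠ j → ¬ Crosses (c i) X) (i : ι) : ¬ Crosses (c i) X :=
  S.isEvenSelection.not_crosses_of_forall_ne S.card_eq_three h i

theorem mem_of_forall_not_crosses (S : IsStuck t c f) {X : Set V} (h : ∀ i, ¬ Crosses (c i) X)
    (hp : p ∈ support c) (hq : q ∈ support c) : p ∈ X → q ∈ X :=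
  S.isMaxTour.mem_of_forall_not_crosses h hp hq

theorem exists_third (S : IsStuck t c f) (h : IsDetour t c p q i) (hpq : p ≠ q) (hne : c i ≠ ∅) :
    ∃ x, x ≠ p ∧ x ≠ q ∧ t i = {p, q, x} ∧ (c i = {p, x} ∨ c i = {q, x}) :=
  S.isEvenSelection.eq_pair_or_eq_pair S.card_eq_three h.1 h.2.1 hpq hne h.2.2

theorem mem_or_mem (S : IsStuck t c f) (h : IsDetour t c p q i) (hpq : p ≠ q) (hne : c i ≠ ∅) :
    p ∈ c i ∨ q ∈ c i :=
  S.isEvenSelection.mem_or_mem S.card_eq_three h.1 h.2.1 hpq hne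

-- Exchanging along the triangle `p q r`, with sides `f`, `j`, `i`, would use one more edge, so it
-- must disconnect the tour.
theorem exists_twoCut (S : IsStuck t c f) (hij : i ≠ j) (hpq : p ≠ q) (hp : p ∈ t f)
    (hq : q ∈ t f) (hr : r ∉ t f) (hi : IsDetour t c p r i) (hj : IsDetour t c q r j)
    (hmeet : p ∈ support c ∨ q ∈ support c ∨ r ∈ support c) :
    ∃ X, IsTwoCut c X i j ∧ r ∈ X ∧ p ∉ X ∧ q ∉ X := by
  obtain ⟨hpi, hri, hci⟩ := hi
  obtain ⟨hqj, hrj, hcj⟩ := hj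
  have hf := S.skipped
  obtain ⟨d, hd, hdf, hdj, hdi, hout⟩ := exists_triangle_tour (t := t) (i := f) (j := j) (k := i)
    (p := p) (q := q) (r := r) (by grind) (by grind) hij.symm hpq (by grind) (by grind) hp hq hqj
    hrj hpi hri
  have hmeet : (support c ∩ support d).Nonempty := by
    obtain h | h | h := hmeet
    · exact ⟨p, h, left_mem_support hdf⟩
    · exact ⟨q, h, left_mem_support hdj⟩
    · exact ⟨r, h, left_mem_support hdi⟩
  have hlost : ∀ n, c n ≠ ∅ → c n ≠ d n := by
    intro n hn hcd
    obtain rfl | rfl | rfl | hdn : n = f ∨ n = j ∨ n = i ∨ d n = ∅ := by grind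
    · exact hn hf
    · exact hcj (hcd.trans hdj)
    · exact hci (hcd.trans (hdi.trans (pair_comm r p)))
    · exact hn (hcd.trans hdn)
  obtain ⟨X, hX, hcd⟩ := S.isMaxTour.exists_cut_of_forall_not_lost S.card_eq_three hd hmeet hf
    (by simp [hdf]) hlost
  exact exists_twoCut_of_triangle hdf hdj hdi hout hf hX hcd

end IsStuck


-- The set where `X`, `Y`, `Z` agree would be crossed by exactly the three edges `i`, `j`, `k`.
theorem IsEvenSelection.false_of_three_twoCuts (ht : ∀ i, #(t i) = 3) (hc : IsEvenSelection t c)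
    {X Y Z : Set V} (hij : i ≠ j) (hik : i ≠ k) (hjk : j ≠ k) (hX : IsTwoCut c X j k)
    (hY : IsTwoCut c Y i k) (hZ : IsTwoCut c Z i j) (hi : ∃ p ∈ c i, p ∈ Y ↔ p ∈ Z)
    (hj : ∃ p ∈ c j, p ∈ X ↔ p ∈ Z) (hk : ∃ p ∈ c k, p ∈ X ↔ p ∈ Y) : False := by
  classical
  have hcross : ∀ n, Crosses (c n) {v | (v ∈ X ↔ v ∈ Y) ∧ (v ∈ Y ↔ v ∈ Z)} ↔
      n = i ∨ n = j ∨ n = k := by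
    intro n
    have hXn := hX n
    have hYn := hY n
    have hZn := hZ n
    obtain h | ⟨a, b, -, h⟩ := hc.eq_empty_or_pair ht n
    · simp only [h, not_crosses_empty, false_iff] at hXn hYn ⊢
      tauto
    · simp only [h, crosses_pair, Set.mem_ofPred_eq] at hXn hYn hZn ⊢
      grind
  have heven := hc.even_card_crosses ht {v | (v ∈ X ↔ v ∈ Y) ∧ (v ∈ Y ↔ v ∈ Z)}
  rw [show ({n | Crosses (c n) _} : Finset ι) = {i, j, k} by ext n; simp [hcross],
    card_eq_three.2 ⟨i, j, k, hij, hik, hjk, rfl⟩] at heven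
  exact absurd heven (by decide)

namespace IsStuck

theorem eq_pair_of_isDetour_of_isDetour (S : IsStuck t c f) (hvw : v ≠ w) (hvd : v ≠ d)
    (hwd : w ≠ d) (hv : IsDetour t c v d i) (hw : IsDetour t c w d i) (hne : c i ≠ ∅) :
    c i = {v, w} := by
  obtain ⟨x, -, -, hti, hc⟩ := S.exists_third hv hvd hne
  have hwi := hw.1
  rw [hti, mem_insert, mem_insert, mem_singleton] at hwi
  obtain rfl := (hwi.resolve_left hvw.symm).resolve_left hwd
  exact hc.resolve_right fun hc => hw.2.2 (hc.trans (pair_comm d w))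

-- The cuts `X`, `Y` separating `d` from `{v, u}` and from `{w, u}` are both crossed by `h` and `j`,
-- so no edge crosses their symmetric difference, which contains `v` but neither `u` nor `d`.
theorem isForced_of_isDetour_of_isDetour (S : IsStuck t c f) {h : ι} (htf : t f = {v, w, u})
    (hvw : v ≠ w) (hvu : v ≠ u) (hwu : w ≠ u) (hd : d ∉ t f) (hv : IsDetour t c v d h)
    (hw : IsDetour t c w d h)
    (hmeet : v ∈ support c ∨ w ∈ support c ∨ u ∈ support c ∨ d ∈ support c) :
    IsForced t c u d := by
  intro j hj
  have hmem : v ∈ t f ∧ w ∈ t f ∧ u ∈ t f := by simp [htf]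
  obtain ⟨hvf, hwf, huf⟩ := hmem
  have hvd : v ≠ d := by grind
  have hwd : w ≠ d := by grind
  have hhj : h ≠ j := by
    rintro rfl
    obtain ⟨x, -, -, hth⟩ := exists_eq_insert_pair (S.card_eq_three h) hv.1 hv.2.1 hvd
    have := hw.1
    have := hj.1
    grind
  have hne : c h ≠ ∅ := by
    by_cases hws : w ∈ support c
    · obtain ⟨X, hX, -⟩ := S.exists_twoCut hhj hwu hwf huf hd hw hj (.inl hws)
      exact hX.ne_empty
    · obtain ⟨X, hX, -⟩ := S.exists_twoCut hhj hvu hvf huf hd hv hj (by tauto)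
      exact hX.ne_empty
  have hch := S.eq_pair_of_isDetour_of_isDetour hvw hvd hwd hv hw hne
  obtain ⟨X, hX, hdX, hvX, huX⟩ := S.exists_twoCut hhj hvu hvf huf hd hv hj
    (.inl (left_mem_support hch))
  obtain ⟨Y, hY, hdY, hwY, huY⟩ := S.exists_twoCut hhj hwu hwf huf hd hw hj
    (.inl (right_mem_support hch))
  have hvwX := hX.not_mem_iff hch
  have hvwY := hY.not_mem_iff hch
  have hcross : ∀ n, ¬ Crosses (c n) {y | y ∈ X ↔ y ∉ Y} := by
    refine S.not_crosses_of_forall_ne (j := j) fun n hnj => ?_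
    by_cases hnh : n = h
    · rw [hnh, hch, crosses_pair, Set.mem_ofPred_eq, Set.mem_ofPred_eq]
      tauto
    · have hXn := hX n
      have hYn := hY n
      grind [Crosses]
  have hcontra : ∀ y ∈ c j, y = u ∨ y = d → False := fun y hy hyud => by
    have := S.mem_of_forall_not_crosses hcross (left_mem_support hch) ⟨j, hy⟩
    grind
  exact (S.mem_or_mem hj (by grind) hX.symm.ne_empty).elim (hcontra u · (.inl rfl))
    (hcontra d · (.inr rfl))

theorem false_of_three_isDetour (S : IsStuck t c f) (htf : t f = {v, w, u}) (hvw : v ≠ w)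
    (hvu : v ≠ u) (hwu : w ≠ u) (hd : d ∉ t f) (hij : i ≠ j) (hik : i ≠ k) (hjk : j ≠ k)
    (hi : IsDetour t c v d i) (hj : IsDetour t c w d j) (hk : IsDetour t c u d k)
    (hmeet : v ∈ support c ∨ w ∈ support c ∨ u ∈ support c ∨ d ∈ support c) : False := by
  have hmem : v ∈ t f ∧ w ∈ t f ∧ u ∈ t f := by simp [htf]
  obtain ⟨hv, hw, hu⟩ := hmem
  have hcuti := fun hne => S.mem_or_mem hi (by grind) hne
  have hcutj := fun hne => S.mem_or_mem hj (by grind) hne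
  have hcutk := fun hne => S.mem_or_mem hk (by grind) hne
  have hsi : v ∈ support c ∨ d ∈ support c := by
    obtain h | h | h | h := hmeet
    · exact .inl h
    · obtain ⟨X, hX, -⟩ := S.exists_twoCut hij hvw hv hw hd hi hj (.inr (.inl h))
      exact (hcuti hX.ne_empty).imp (⟨i, ·⟩) (⟨i, ·⟩)
    · obtain ⟨X, hX, -⟩ := S.exists_twoCut hik hvu hv hu hd hi hk (.inr (.inl h))
      exact (hcuti hX.ne_empty).imp (⟨i, ·⟩) (⟨i, ·⟩)
    · exact .inr h
  obtain ⟨Z, hZ, hdZ, hvZ, hwZ⟩ := S.exists_twoCut hij hvw hv hw hd hi hj (hsi.imp_right .inr)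
  obtain ⟨Y, hY, hdY, hvY, huY⟩ := S.exists_twoCut hik hvu hv hu hd hi hk (hsi.imp_right .inr)
  have hsj : w ∈ support c ∨ d ∈ support c :=
    (hcutj hZ.symm.ne_empty).imp (⟨j, ·⟩) (⟨j, ·⟩)
  obtain ⟨X, hX, hdX, hwX, huX⟩ := S.exists_twoCut hjk hwu hw hu hd hj hk (hsj.imp_right .inr)
  refine S.isEvenSelection.false_of_three_twoCuts S.card_eq_three hij hik hjk hX hY hZ ?_ ?_ ?_
  · exact (hcuti hZ.ne_empty).elim (⟨v, ·, iff_of_false hvY hvZ⟩) (⟨d, ·, iff_of_true hdY hdZ⟩)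
  · exact (hcutj hX.ne_empty).elim (⟨w, ·, iff_of_false hwX hwZ⟩) (⟨d, ·, iff_of_true hdX hdZ⟩)
  · exact (hcutk hX.symm.ne_empty).elim (⟨u, ·, iff_of_false huX huY⟩)
      (⟨d, ·, iff_of_true hdX hdY⟩)

theorem exists_isForced_of_mem_support (S : IsStuck t c f) (hd : d ∉ t f)
    (hmeet : (∃ v ∈ t f, v ∈ support c) ∨ d ∈ support c) : ∃ v ∈ t f, IsForced t c v d := by
  by_contra! hcon
  obtain ⟨v, w, u, hvw, hvu, hwu, htf⟩ := Finset.card_eq_three.1 (S.card_eq_three f)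
  rw [htf] at hcon hmeet
  simp only [mem_insert, mem_singleton, forall_eq_or_imp, forall_eq, not_isForced_iff,
    exists_eq_or_imp, exists_eq_left, or_assoc] at hcon hmeet
  obtain ⟨⟨i, hi⟩, ⟨j, hj⟩, ⟨k, hk⟩⟩ := hcon
  by_cases hij : i = j
  · subst hij
    exact S.isForced_of_isDetour_of_isDetour htf hvw hvu hwu hd hi hj hmeet k hk
  by_cases hik : i = k
  · subst hik
    exact S.isForced_of_isDetour_of_isDetour (htf.trans (by grind)) hvu hvw hwu.symm hd hi hk
      (by tauto) j hj
  by_cases hjk : j = k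
  · subst hjk
    exact S.isForced_of_isDetour_of_isDetour (htf.trans (by grind)) hwu hvw.symm hvu.symm hd hj hk
      (by tauto) i hi
  exact S.false_of_three_isDetour htf hvw hvu hwu hd hij hik hjk hi hj hk hmeet

theorem exists_mem_support (S : IsStuck t c f) : ∃ v ∈ t f, v ∈ support c := by
  obtain ⟨a, ha⟩ := S.nonempty
  by_cases haf : a ∈ t f
  · exact ⟨a, haf, ha⟩
  obtain ⟨v, hv, hva⟩ := S.exists_isForced_of_mem_support haf (.inr ha)
  obtain ⟨i, hvi, hai⟩ := S.cover v a (by rintro rfl; exact haf hv)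
  exact ⟨v, hv, left_mem_support (hva.eq_pair hvi hai)⟩

theorem exists_isForced (S : IsStuck t c f) (hd : d ∉ t f) : ∃ v ∈ t f, IsForced t c v d :=
  S.exists_isForced_of_mem_support hd (.inl S.exists_mem_support)

-- Otherwise exchanging along the digon `v w` with sides `f` and `i` would use one more edge.
theorem eq_pair_of_mem_support (S : IsStuck t c f) (hv : v ∈ t f) (hw : w ∈ t f) (hvw : v ≠ w)
    (hif : i ≠ f) (hvi : v ∈ t i) (hwi : w ∈ t i) (hvs : v ∈ support c) : c i = {v, w} := by
  by_contra hne
  have hf := S.skipped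
  obtain ⟨d, hd, hdf, hdi, hout⟩ := exists_digon_tour hif.symm hvw hv hw hvi hwi
  have hcases : ∀ n, n = f ∨ n = i ∨ d n = ∅ := by grind
  have hlost : ∀ n, c n ≠ ∅ → c n ≠ d n := by
    intro n hn hcd
    obtain rfl | rfl | hdn := hcases n
    · exact hn hf
    · exact hne (hcd.trans (hdi.trans (pair_comm w v)))
    · exact hn (hcd.trans hdn)
  obtain ⟨X, ⟨m, hm⟩, hX⟩ := S.isMaxTour.exists_cut_of_forall_not_lost S.card_eq_three hd
    ⟨v, hvs, left_mem_support hdf⟩ hf (by simp [hdf]) hlost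
  have hvwX : v ∈ X ↔ w ∈ X := by
    simpa [hf, hdf, crosses_pair] using hX f
  obtain rfl | rfl | hdm := hcases m
  · exact crosses_pair.1 (hdf ▸ hm) hvwX
  · exact crosses_pair.1 (hdi ▸ hm) hvwX.symm
  · simp [hdm] at hm

-- Exchanging along the triangle `u v x` with sides `f`, `i`, `k` would skip `k` and use both `f`
-- and `i`.
theorem false_of_triangle (S : IsStuck t c f) (hux : u ≠ x) (hvx : v ≠ x) (huv : u ≠ v)
    (hu : u ∈ t f) (hv : v ∈ t f) (hvi : v ∈ t i) (hxi : x ∈ t i) (hi : c i = ∅) (hif : i ≠ f)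
    (huk : u ∈ t k) (hxk : x ∈ t k) (hk : c k = {u, x}) : False := by
  have hf := S.skipped
  have hkf : k ≠ f := by rintro rfl; simp [hk] at hf
  have hki : k ≠ i := by rintro rfl; simp [hk] at hi
  obtain ⟨d, hd, hdf, hdi, hdk, hout⟩ := exists_triangle_tour hif.symm hkf.symm hki.symm huv hvx hux
    hu hv hvi hxi huk hxk
  have hlost : #{n | c n ≠ ∅ ∧ c n = d n} ≤ 1 := by
    refine (card_le_card fun n hn => ?_).trans (card_singleton k).le
    simp only [mem_filter, mem_univ, true_and, mem_singleton] at hn ⊢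
    obtain rfl | rfl | rfl | hdn : n = f ∨ n = i ∨ n = k ∨ d n = ∅ := by grind
    · exact absurd hf hn.1
    · exact absurd hi hn.1
    · rfl
    · exact absurd (hn.2.trans hdn) hn.1
  have hgain : 1 < #{n | c n = ∅ ∧ d n ≠ ∅} :=
    one_lt_card.2 ⟨f, by simp [hf, hdf], i, by simp [hi, hdi], hif.symm⟩
  obtain ⟨X, hX, hcd⟩ := S.isMaxTour.exists_cut S.card_eq_three hd
    ⟨u, left_mem_support hk, left_mem_support hdf⟩ (hlost.trans_lt hgain)
  obtain ⟨Y, hY, -⟩ := exists_twoCut_of_triangle hdf hdi hdk hout hf hX hcd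
  exact hY.symm.ne_empty hi

theorem eq_pair (S : IsStuck t c f) (hv : v ∈ t f) (hw : w ∈ t f) (hvw : v ≠ w) (hif : i ≠ f)
    (hvi : v ∈ t i) (hwi : w ∈ t i) : c i = {v, w} := by
  by_cases hvs : v ∈ support c
  · exact S.eq_pair_of_mem_support hv hw hvw hif hvi hwi hvs
  by_cases hws : w ∈ support c
  · rw [pair_comm]
    exact S.eq_pair_of_mem_support hw hv hvw.symm hif hwi hvi hws
  have hi : c i = ∅ := by
    by_contra hne
    exact (S.isEvenSelection.mem_or_mem S.card_eq_three hvi hwi hvw hne).elim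
      (fun h => hvs ⟨i, h⟩) fun h => hws ⟨i, h⟩
  exfalso
  obtain ⟨u, huf, hus⟩ := S.exists_mem_support
  have huv : u ≠ v := by rintro rfl; exact hvs hus
  have huw : u ≠ w := by rintro rfl; exact hws hus
  obtain ⟨x, hxv, hxw, hti⟩ := exists_eq_insert_pair (S.card_eq_three i) hvi hwi hvw
  have hxi : x ∈ t i := by simp [hti]
  by_cases hxf : x ∈ t f
  · obtain rfl : x = u := by
      obtain ⟨y, -, -, htf⟩ := exists_eq_insert_pair (S.card_eq_three f) hv hw hvw
      grind
    simp [S.eq_pair_of_mem_support hxf hv huv hif hxi hvi hus] at hi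
  · obtain ⟨z, hz, hzx⟩ := S.exists_isForced hxf
    have hzx' : z ≠ x := by rintro rfl; exact hxf hz
    obtain ⟨k, hzk, hxk⟩ := S.cover z x hzx'
    have hk := hzx.eq_pair hzk hxk
    have hzv : z ≠ v := by rintro rfl; exact hvs (left_mem_support hk)
    exact S.false_of_triangle hzx' hxv.symm hzv hz hv hvi hxi hi hif hzk hxk hk

end IsStuck

end Stuck

section TwoDetours

variable {V ι : Type*} [DecidableEq V] [Fintype ι] {t c : ι → Finset V} {f i k m n : ι}
  {a b e g p q x y : V}

theorem IsStuck.exists_third_of_mem (S : IsStuck t c f) (h : IsDetour t c p q i) (hpq : p ≠ q)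
    (hp : p ∈ c i) : ∃ x, x ≠ p ∧ x ≠ q ∧ t i = {p, q, x} ∧ c i = {p, x} := by
  obtain ⟨x, hxp, hxq, hti, hci⟩ := S.exists_third h hpq (ne_empty_of_mem hp)
  exact ⟨x, hxp, hxq, hti, hci.resolve_right fun hci => by grind⟩

/-- A vertex `g` outside the skipped edge `f = {a, b, e}` has detours `m` and `n` to two different
vertices `a` and `b` of `f`. This configuration turns out to be impossible. -/
structure HasTwoDetours (t c : ι → Finset V) (f : ι) (a b e g : V) (m n : ι) : Prop
    extends IsStuck t c f where
  skipped_eq : t f = {a, b, e}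
  ne_ab : a ≠ b
  ne_ae : a ≠ e
  ne_be : b ≠ e
  notMem : g ∉ t f
  ne : m ≠ n
  left : IsDetour t c a g m
  right : IsDetour t c b g n

namespace HasTwoDetours

theorem symm (H : HasTwoDetours t c f a b e g m n) : HasTwoDetours t c f b a e g n m :=
  ⟨H.toIsStuck, H.skipped_eq.trans (insert_comm a b {e}), H.ne_ab.symm, H.ne_be, H.ne_ae, H.notMem,
    H.ne.symm, H.right, H.left⟩

theorem mem_a (H : HasTwoDetours t c f a b e g m n) : a ∈ t f := by simp [H.skipped_eq]

theorem mem_e (H : HasTwoDetours t c f a b e g m n) : e ∈ t f := by simp [H.skipped_eq]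

theorem ne_ag (H : HasTwoDetours t c f a b e g m n) : a ≠ g :=
  fun h => H.notMem (h ▸ H.mem_a)

theorem ne_eg (H : HasTwoDetours t c f a b e g m n) : e ≠ g :=
  fun h => H.notMem (h ▸ H.mem_e)

theorem left_ne (H : HasTwoDetours t c f a b e g m n) : m ≠ f :=
  fun h => H.notMem (h ▸ H.left.2.1)

theorem isForced (H : HasTwoDetours t c f a b e g m n) : IsForced t c e g := by
  obtain ⟨z, hz, hzg⟩ := H.exists_isForced H.notMem
  rw [H.skipped_eq, mem_insert, mem_insert, mem_singleton] at hz
  obtain rfl | rfl | rfl := hz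
  · exact absurd H.left (hzg m)
  · exact absurd H.right (hzg n)
  · exact hzg

theorem exists_eq_pair (H : HasTwoDetours t c f a b e g m n) : ∃ k, c k = {e, g} := by
  obtain ⟨k, hek, hgk⟩ := H.cover e g H.ne_eg
  exact ⟨k, H.isForced.eq_pair hek hgk⟩

theorem a_notMem (H : HasTwoDetours t c f a b e g m n) (hk : c k = {e, g}) : a ∉ t k := by
  intro hak
  have hsub := H.isEvenSelection.subset k
  rw [hk, insert_subset_iff, singleton_subset_iff] at hsub
  have hkf : k ≠ f := by rintro rfl; exact H.notMem hsub.2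
  have hgk : g ∈ c k := by simp [hk]
  rw [H.eq_pair H.mem_a H.mem_e H.ne_ae hkf hak hsub.1, mem_insert, mem_singleton] at hgk
  exact hgk.elim H.ne_ag.symm H.ne_eg.symm

theorem ne_left (H : HasTwoDetours t c f a b e g m n) (hk : c k = {e, g}) : k ≠ m := by
  rintro rfl
  exact H.a_notMem hk H.left.1

theorem exists_cut (H : HasTwoDetours t c f a b e g m n) :
    ∃ X, IsTwoCut c X m n ∧ g ∈ X ∧ e ∈ X ∧ a ∉ X ∧ b ∉ X := by
  obtain ⟨k, hk⟩ := H.exists_eq_pair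
  obtain ⟨X, hX, hgX, haX, hbX⟩ := H.exists_twoCut H.ne H.ne_ab H.mem_a H.symm.mem_a H.notMem H.left
    H.right (.inr (.inr (right_mem_support hk)))
  exact ⟨X, hX, hgX, (hX.mem_iff_of_ne (H.ne_left hk) (H.symm.ne_left hk) hk).2 hgX, haX, hbX⟩

theorem left_ne_empty (H : HasTwoDetours t c f a b e g m n) : c m ≠ ∅ := by
  obtain ⟨X, hX, -⟩ := H.exists_cut
  exact hX.ne_empty

theorem mem_iff_notMem (H : HasTwoDetours t c f a b e g m n) : a ∈ c m ↔ g ∉ c m := by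
  obtain ⟨x, hxa, hxg, -, hcm | hcm⟩ := H.exists_third H.left H.ne_ag H.left_ne_empty
  · simp [hcm, H.ne_ag.symm, hxg.symm]
  · simp [hcm, H.ne_ag, hxa.symm]

theorem third_notMem (H : HasTwoDetours t c f a b e g m n) (hyb : y ≠ b) (hyn : y ∈ t n)
    (hn : c n = {g, y}) : y ∉ t f := by
  obtain ⟨X, hX, hgX, heX, -⟩ := H.exists_cut
  have hgy := hX.symm.not_mem_iff hn
  rw [H.skipped_eq, mem_insert, mem_insert, mem_singleton]
  rintro (rfl | rfl | rfl)
  · have hgn : g ∈ c n := by simp [hn]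
    rw [H.eq_pair H.mem_a H.symm.mem_a H.ne_ab H.symm.left_ne hyn H.right.1] at hgn
    simp [H.ne_ag.symm, H.symm.ne_ag.symm] at hgn
  · exact hyb rfl
  · exact hgy (iff_of_true hgX heX)

theorem exists_isDetour_third (H : HasTwoDetours t c f a b e g m n) (ha : a ∈ c m) (hyb : y ≠ b)
    (hyg : y ≠ g) (hyn : y ∈ t n) (hn : c n = {g, y}) : ∃ l, IsDetour t c e y l := by
  rw [← not_isForced_iff]
  intro hey
  have hyf := H.third_notMem hyb hyn hn
  have hye : e ≠ y := fun h => hyf (h ▸ H.mem_e)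
  have hya : a ≠ y := fun h => hyf (h ▸ H.mem_a)
  obtain ⟨X, hX, hgX, heX, -⟩ := H.exists_cut
  have hgy := hX.symm.not_mem_iff hn
  obtain ⟨l, hel, hyl⟩ := H.cover e y hye
  have hl := hey.eq_pair hel hyl
  have hlX : Crosses (c l) X := by
    rw [hl, crosses_pair]
    exact fun h => hgy (iff_of_true hgX (h.1 heX))
  obtain rfl | rfl := (hX l).1 hlX
  · simp [hl, H.ne_ae, hya] at ha
  · have hgn : g ∈ c l := by simp [hn]
    simp [hl, H.ne_eg.symm, hyg.symm] at hgn

theorem isForced_third (H : HasTwoDetours t c f a b e g m n) (ha : a ∈ c m) (hyb : y ≠ b)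
    (hyg : y ≠ g) (hyn : y ∈ t n) (hn : c n = {g, y}) : IsForced t c a y := by
  obtain ⟨z, hz, hzy⟩ := H.exists_isForced (H.third_notMem hyb hyn hn)
  rw [H.skipped_eq, mem_insert, mem_insert, mem_singleton] at hz
  obtain rfl | rfl | rfl := hz
  · exact hzy
  · have hgn : g ∈ c n := by simp [hn]
    simp [hzy.eq_pair H.right.1 hyn, H.symm.ne_ag.symm, hyg.symm] at hgn
  · obtain ⟨l, hl⟩ := H.exists_isDetour_third ha hyb hyg hyn hn
    exact absurd hl (hzy l)

theorem exists_eq_pair_third (H : HasTwoDetours t c f a b e g m n) (ha : a ∈ c m)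
    (hg : g ∈ c n) : ∃ y l, y ≠ b ∧ y ≠ g ∧ t n = {g, b, y} ∧ c n = {g, y} ∧ c l = {a, y} ∧
      l ≠ m ∧ l ≠ n ∧ a ∈ t l := by
  obtain ⟨y, hyg, hyb, htn, hn⟩ := H.exists_third_of_mem H.right.symm H.symm.ne_ag.symm hg
  have hyn : y ∈ t n := by simp [htn]
  have hya : a ≠ y := fun h => H.third_notMem hyb hyn hn (h ▸ H.mem_a)
  obtain ⟨l, hal, hyl⟩ := H.cover a y hya
  have hl := (H.isForced_third ha hyb hyg hyn hn).eq_pair hal hyl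
  obtain ⟨X, hX, hgX, -, haX, -⟩ := H.exists_cut
  refine ⟨y, l, hyb, hyg, htn, hn, hl, ?_, ?_, hal⟩
  · rintro rfl
    have := hX.not_mem_iff hl
    have := hX.symm.not_mem_iff hn
    tauto
  · rintro rfl
    simp [hl, H.ne_ag.symm, hyg.symm] at hg

-- With `X` from `exists_cut` and `Y` the cut separating `y` from `{b, e}`, the set `Xᶜ ∩ Yᶜ`
-- contains `b` but not `a`, and only `l` could cross it.
theorem b_notMem_support (H : HasTwoDetours t c f a b e g m n) (ha : a ∈ c m) (hg : g ∈ c n) :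
    b ∉ support c := by
  intro hb
  obtain ⟨y, k, hyb, hyg, htn, hn, hk, hkm, hkn, hak⟩ := H.exists_eq_pair_third ha hg
  obtain ⟨x, hxa, hxg, htm, hm⟩ := H.exists_third_of_mem H.left H.ne_ag ha
  obtain ⟨X, hX, hgX, -, haX, hbX⟩ := H.exists_cut
  have hyX := hX.symm.not_mem_iff hn
  have hxX := hX.not_mem_iff hm
  have hyn : y ∈ t n := by simp [htn]
  have hyf : y ∉ t f := H.third_notMem hyb hyn hn
  have hya : y ≠ a := fun h => hyf (h ▸ H.mem_a)
  have hye : y ≠ e := fun h => hyf (h ▸ H.mem_e)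
  obtain ⟨l, hl⟩ := H.exists_isDetour_third ha hyb hyg hyn hn
  have hlf : l ≠ f := fun h => hyf (h ▸ hl.2.1)
  have hnl : n ≠ l := by
    rintro rfl
    simpa [htn, H.ne_eg, H.ne_be.symm, hye.symm] using hl.1
  have hkl : k ≠ l := by
    rintro rfl
    have hyk' : y ∈ c k := by simp [hk]
    simp [H.eq_pair H.mem_a H.mem_e H.ne_ae hlf hak hl.1, hya, hye] at hyk'
  have hml : m ≠ l := by
    rintro rfl
    obtain rfl : y = x := by simpa [htm, hya, hyg] using hl.2.1
    tauto
  have hbn : IsDetour t c b y n := by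
    refine ⟨H.right.1, hyn, fun h => ?_⟩
    simp [h, H.symm.ne_ag.symm, hyg.symm] at hg
  obtain ⟨Y, hY, hyY, hbY, -⟩ := H.exists_twoCut hnl H.ne_be H.symm.mem_a H.mem_e hyf hbn hl
    (.inl hb)
  have haY : a ∈ Y := (hY.mem_iff_of_ne hkn hkl hk).2 hyY
  have hxY : x ∈ Y := (hY.mem_iff_of_ne H.ne hml hm).1 haY
  have hcross : ∀ i, ¬ Crosses (c i) (Xᶜ ∩ Yᶜ) := by
    refine H.not_crosses_of_forall_ne (j := l) fun i hil => ?_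
    obtain rfl | him := eq_or_ne i m
    · simp [hm, crosses_pair, haY, hxY]
    obtain rfl | hin := eq_or_ne i n
    · simp [hn, crosses_pair, hgX, hyY]
    have := hX i
    have := hY i
    grind [Crosses]
  exact (H.mem_of_forall_not_crosses hcross hb ⟨m, ha⟩ ⟨hbX, hbY⟩).2 haY

-- The exchange along the triangle `a e g` with sides `f`, `k`, `m` makes `k` the skipped edge.
theorem exists_exchange_or_exists_cut (H : HasTwoDetours t c f a b e g m n) (hk : c k = {e, g}) :
    (∃ c' y, HasTwoDetours t c' k g e y b n f ∧ c' n = c n ∧ e ∈ c' f ∧ (g ∈ c' m ↔ g ∉ c m)) ∨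
      ∃ W, IsTwoCut c W m k ∧ g ∈ W ∧ a ∉ W ∧ e ∉ W := by
  have hf := H.skipped
  have hsub := H.isEvenSelection.subset k
  rw [hk, insert_subset_iff, singleton_subset_iff] at hsub
  obtain ⟨hek, hgk⟩ := hsub
  have hkf : k ≠ f := by rintro rfl; exact H.notMem hgk
  have hkm := H.ne_left hk
  have hkn := H.symm.ne_left hk
  obtain ⟨d, hd, hdf, hdk, hdm, hout⟩ := exists_triangle_tour hkf.symm H.left_ne.symm hkm H.ne_ae
    H.ne_eg H.ne_ag H.mem_a H.mem_e hek hgk H.left.1 H.left.2.1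
  refine (H.isMaxTour.symmDiff_or_exists_cut H.card_eq_three hd
    ⟨g, right_mem_support hk, right_mem_support hdk⟩).imp (fun hcd => ?_) fun ⟨X, hX, hcd⟩ =>
      exists_twoCut_of_triangle hdf hdk hdm hout hf hX hcd
  have hf' : (c ∆ d) f = {a, e} := by rw [Pi.symmDiff_apply, hf, hdf]; exact bot_symmDiff _
  have hk' : (c ∆ d) k = ∅ := by rw [Pi.symmDiff_apply, hk, hdk]; exact symmDiff_self _
  have hn' : (c ∆ d) n = c n := by
    rw [Pi.symmDiff_apply, hout n H.symm.left_ne hkn.symm H.ne.symm]; exact symmDiff_bot _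
  have hused : numUsed c ≤ numUsed (c ∆ d) := by
    refine numUsed_le_numUsed_symmDiff hf (by simp [hdf]) (k := k) fun i hik hci hcd => ?_
    obtain rfl | rfl | hdi : i = f ∨ i = m ∨ d i = ∅ := by grind
    · exact hci hf
    · exact H.left.2.2 (hcd.trans (hdm.trans (pair_comm g a)))
    · exact hci (hcd.trans hdi)
  obtain ⟨y, hyg, hye, htk⟩ := exists_eq_insert_pair (H.card_eq_three k) hgk hek H.ne_eg.symm
  refine ⟨c ∆ d, y, ⟨⟨H.card_eq_three, H.cover, H.isMaxTour.of_numUsed_le hcd hused, hk',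
    e, right_mem_support hf'⟩, htk, H.ne_eg.symm, hyg.symm, hye.symm, H.symm.a_notMem hk,
    H.symm.left_ne, ?_, ?_⟩, hn', ?_, ?_⟩
  · exact ⟨H.right.2.1, H.right.1, hn' ▸ H.right.symm.2.2⟩
  · refine ⟨H.mem_e, H.symm.mem_a, fun h => ?_⟩
    have ha : a ∈ (c ∆ d) f := by simp [hf']
    simp [h, H.ne_ae, H.ne_ab] at ha
  · simp [hf']
  · simp [hdm, mem_symmDiff]

theorem exists_exchange (H : HasTwoDetours t c f a b e g m n) (hk : c k = {e, g}) :
    (∃ c' y, HasTwoDetours t c' k g e y b n f ∧ c' n = c n ∧ e ∈ c' f ∧ (g ∈ c' m ↔ g ∉ c m)) ∨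
      ∃ c' y, HasTwoDetours t c' k g e y a m f ∧ c' m = c m ∧ e ∈ c' f ∧
        (g ∈ c' n ↔ g ∉ c n) := by
  refine (H.exists_exchange_or_exists_cut hk).imp_right fun ⟨W, hW, hgW, haW, heW⟩ => ?_
  refine (H.symm.exists_exchange_or_exists_cut hk).resolve_right
    fun ⟨W', hW', hgW', hbW', heW'⟩ => ?_
  obtain ⟨X, hX, hgX, -, haX, hbX⟩ := H.exists_cut
  refine H.isEvenSelection.false_of_three_twoCuts H.card_eq_three H.ne (H.ne_left hk).symm
    (H.symm.ne_left hk).symm hW' hW hX ?_ ?_ ⟨e, by simp [hk], iff_of_false heW' heW⟩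
  · exact (H.mem_or_mem H.left H.ne_ag H.left_ne_empty).elim (⟨a, ·, iff_of_false haW haX⟩)
      (⟨g, ·, iff_of_true hgW hgX⟩)
  · exact (H.mem_or_mem H.right H.symm.ne_ag H.symm.left_ne_empty).elim
      (⟨b, ·, iff_of_false hbW' hbX⟩) (⟨g, ·, iff_of_true hgW' hgX⟩)

theorem false_of_a_mem_of_b_mem (H : HasTwoDetours t c f a b e g m n) (ha : a ∈ c m)
    (hb : b ∈ c n) : False := by
  obtain ⟨k, hk⟩ := H.exists_eq_pair
  obtain ⟨c', y, H', hn, hf, hm⟩ | ⟨c', y, H', hm, hf, hn⟩ := H.exists_exchange hk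
  · exact H'.symm.b_notMem_support hf (hn ▸ hb) ⟨m, hm.2 (H.mem_iff_notMem.1 ha)⟩
  · exact H'.symm.b_notMem_support hf (hm ▸ ha) ⟨n, hn.2 (H.symm.mem_iff_notMem.1 hb)⟩

theorem false_of_g_mem_of_g_mem (H : HasTwoDetours t c f a b e g m n) (hgm : g ∈ c m)
    (hgn : g ∈ c n) : False := by
  obtain ⟨k, hk⟩ := H.exists_eq_pair
  obtain ⟨c', y, H', hn, hf, -⟩ | ⟨c', y, H', hm, hf, -⟩ := H.exists_exchange hk
  · exact H'.false_of_a_mem_of_b_mem (hn ▸ hgn) hf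
  · exact H'.false_of_a_mem_of_b_mem (hm ▸ hgm) hf

theorem false_of_a_mem_of_g_mem (H : HasTwoDetours t c f a b e g m n) (ha : a ∈ c m)
    (hg : g ∈ c n) : False := by
  obtain ⟨k, hk⟩ := H.exists_eq_pair
  obtain ⟨c', y, H', hn, hf, -⟩ | ⟨W, hW, hgW, haW, -⟩ := H.exists_exchange_or_exists_cut hk
  · exact H'.false_of_a_mem_of_b_mem (hn ▸ hg) hf
  · obtain ⟨y, l, -, -, -, hn, hl, hlm, -⟩ := H.exists_eq_pair_third ha hg
    have hyW : y ∈ W := (hW.mem_iff_of_ne H.ne.symm (H.symm.ne_left hk).symm hn).1 hgW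
    have hlk : l ≠ k := by
      rintro rfl
      have hal : a ∈ c l := by simp [hl]
      simp [hk, H.ne_ae, H.ne_ag] at hal
    exact haW ((hW.mem_iff_of_ne hlm hlk hl).2 hyW)

theorem false (H : HasTwoDetours t c f a b e g m n) : False := by
  by_cases ha : a ∈ c m <;> by_cases hb : b ∈ c n
  · exact H.false_of_a_mem_of_b_mem ha hb
  · exact H.false_of_a_mem_of_g_mem ha (by simpa using H.symm.mem_iff_notMem.not.1 hb)
  · exact H.symm.false_of_a_mem_of_g_mem hb (by simpa using H.mem_iff_notMem.not.1 ha)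
  · exact H.false_of_g_mem_of_g_mem (by simpa using H.mem_iff_notMem.not.1 ha)
      (by simpa using H.symm.mem_iff_notMem.not.1 hb)

end HasTwoDetours

theorem IsStuck.isDetour_unique (S : IsStuck t c f) (hp : p ∈ t f) (hq : q ∈ t f) (hpq : p ≠ q)
    (hg : g ∉ t f) (hm : IsDetour t c p g m) (hn : IsDetour t c q g n) : m = n := by
  by_contra hmn
  obtain ⟨x, hxp, hxq, htf⟩ := exists_eq_insert_pair (S.card_eq_three f) hp hq hpq
  exact HasTwoDetours.false ⟨S, htf, hpq, hxp.symm, hxq.symm, hg, hmn, hm, hn⟩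

end TwoDetours

section Bypass

variable {V ι : Type*} [DecidableEq V] {t c : ι → Finset V} {f k k' m : ι} {p v d d' a : V}

/-- Some edge `{p, d, a}` is traversed between `p` and `d`, bypassing `a`. -/
def IsBypassed (t c : ι → Finset V) (p d a : V) : Prop :=
  a ≠ p ∧ a ≠ d ∧ ∃ k, t k = {p, d, a} ∧ c k = {p, d}

theorem IsBypassed.exists_isDetour (h : IsBypassed t c p d a) :
    ∃ k, IsDetour t c p a k ∧ t k = {p, d, a} := by
  obtain ⟨hap, had, k, htk, hck⟩ := h
  have hak : a ∉ c k := by simp [hck, hap, had]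
  exact ⟨k, ⟨by simp [htk], by simp [htk], fun h => hak (by simp [h])⟩, htk⟩

theorem IsBypassed.not_isForced (h : IsBypassed t c p d a) : ¬ IsForced t c p a :=
  not_isForced_iff.2 (h.exists_isDetour.imp fun _ hk => hk.1)

/-- Exactly one vertex of the edge `f` has a detour to the vertex `a` outside of `f`. -/
def IsDeficient (t c : ι → Finset V) (f : ι) (a : V) : Prop :=
  a ∉ t f ∧ ∃ p ∈ t f, ¬ IsForced t c p a ∧ ∀ v ∈ t f, v ≠ p → IsForced t c v a

/-- The vertex `p` of the edge `f` has no detour to the vertex `d` outside of `f`, but some other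
vertex of `f` has one. -/
def IsPartlyForced (t c : ι → Finset V) (f : ι) (d p : V) : Prop :=
  d ∉ t f ∧ p ∈ t f ∧ IsForced t c p d ∧ ∃ v ∈ t f, ¬ IsForced t c v d

theorem isTwoCut_of_quadrilateral {e : ι → Finset V} {X : Set V} (hef : e f = {p, v})
    (hem : e m = {v, d}) (hek : e k = {d, a}) (hek' : e k' = {a, p})
    (hout : ∀ n, n ≠ f → n ≠ m → n ≠ k → n ≠ k' → e n = ∅) (hf : c f = ∅) (hck : c k = {p, d})
    (hX : ∃ n, Crosses (e n) X) (hce : ∀ n, Crosses (c n) X ↔ Crosses (e n) X) :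
    IsTwoCut c X k m ∧ (a ∈ X ↔ v ∈ X) ∧ ¬ (d ∈ X ↔ v ∈ X) := by
  have hpv : p ∈ X ↔ v ∈ X := by
    simpa [hf, hef, crosses_pair] using hce f
  have hpa : p ∈ X ↔ a ∈ X := by
    have := hce k
    rw [hck, hek, crosses_pair, crosses_pair] at this
    tauto
  have heX : ∀ n, Crosses (e n) X → (n = k ∨ n = m) ∧ ¬ (d ∈ X ↔ v ∈ X) := by
    intro n hn
    obtain rfl | rfl | rfl | rfl | hen : n = f ∨ n = m ∨ n = k ∨ n = k' ∨ e n = ∅ := by grind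
    · rw [hef, crosses_pair] at hn; tauto
    · rw [hem, crosses_pair] at hn; tauto
    · rw [hek, crosses_pair] at hn; tauto
    · rw [hek', crosses_pair] at hn; tauto
    · simp [hen] at hn
  obtain ⟨n, hn⟩ := hX
  have hdv := (heX n hn).2
  refine ⟨fun n => (hce n).trans ⟨fun hn => (heX n hn).1, ?_⟩, by tauto, hdv⟩
  rintro (rfl | rfl)
  · rw [hek, crosses_pair]; tauto
  · rw [hem, crosses_pair]; tauto

variable [Fintype ι]

namespace IsStuck

theorem exists_isBypassed (S : IsStuck t c f) (hp : p ∈ t f) (hd : d ∉ t f)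
    (hpd : IsForced t c p d) : ∃ a ∉ t f, IsBypassed t c p d a := by
  have hne : p ≠ d := by grind
  obtain ⟨k, hpk, hdk⟩ := S.cover p d hne
  obtain ⟨a, hap, had, htk⟩ := exists_eq_insert_pair (S.card_eq_three k) hpk hdk hne
  have hck := hpd.eq_pair hpk hdk
  refine ⟨a, fun ha => ?_, hap, had, k, htk, hck⟩
  have hpa : c k = {p, a} := S.eq_pair hp ha hap.symm (by grind) hpk (by simp [htk])
  have hdc : d ∈ c k := by simp [hck]
  simp [hpa, hne.symm, had.symm] at hdc

theorem isForced_of_isBypassed (S : IsStuck t c f) (hp : p ∈ t f) (hd : d ∉ t f) (ha : a ∉ t f)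
    (h : IsBypassed t c p d a) (hv : v ∈ t f) (hvp : v ≠ p) : IsForced t c v a := by
  intro n hn
  obtain ⟨k, hk, htk⟩ := h.exists_isDetour
  obtain rfl := S.isDetour_unique hp hv hvp.symm ha hk hn
  have hvk := hn.1
  rw [htk] at hvk
  grind

theorem isDeficient_of_isBypassed (S : IsStuck t c f) (hp : p ∈ t f) (hd : d ∉ t f) (ha : a ∉ t f)
    (h : IsBypassed t c p d a) : IsDeficient t c f a :=
  ⟨ha, p, hp, h.not_isForced, fun _ => S.isForced_of_isBypassed hp hd ha h⟩

-- Exchanging along the quadrilateral `p v d a`, with sides `f`, `m`, `k`, `k'`, would use one more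
-- edge, so it must disconnect the tour.
theorem exists_twoCut_of_isBypassed (S : IsStuck t c f) (hp : p ∈ t f) (hd : d ∉ t f)
    (hd' : d' ∉ t f) (hdd : d ≠ d') (ha : a ∉ t f) (had : a ≠ d) (had' : a ≠ d')
    (htk : t k = {p, d, a}) (hck : c k = {p, d}) (htk' : t k' = {p, d', a})
    (hck' : c k' = {p, d'}) (hv : v ∈ t f) (hvp : v ≠ p) (hm : IsDetour t c v d m) :
    ∃ X, IsTwoCut c X k m ∧ (a ∈ X ↔ v ∈ X) ∧ ¬ (d ∈ X ↔ v ∈ X) := by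
  obtain ⟨hvm, hdm, hcm⟩ := hm
  have hf := S.skipped
  have hvk : v ∉ t k := by rw [htk]; grind
  have hvk' : v ∉ t k' := by rw [htk']; grind
  have hdk : d ∈ t k := by simp [htk]
  have hdk' : d ∉ t k' := by rw [htk']; grind
  have hak : a ∈ t k := by simp [htk]
  have hak' : a ∈ t k' := by simp [htk']
  have hedges : [f, m, k, k'].Nodup := by
    clear hcm
    simp only [List.nodup_cons, List.mem_cons, List.not_mem_nil]
    grind
  have hverts : [p, v, d, a].Nodup := by
    clear hcm
    simp only [List.nodup_cons, List.mem_cons, List.not_mem_nil]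
    grind
  obtain ⟨e, he, hef, hem, hek, hek', hout⟩ := exists_quadrilateral_tour (t := t) (i := f) (j := m)
    (k := k) (l := k') (p := p) (q := v) (r := d) (s := a) hedges hverts
    hp hv hvm hdm hdk hak (by simp [htk']) hak'
  have hlost : ∀ n, c n ≠ ∅ → c n ≠ e n := by
    intro n hn hce
    obtain rfl | rfl | rfl | rfl | hen : n = f ∨ n = m ∨ n = k ∨ n = k' ∨ e n = ∅ := by
      clear hcm hn; grind
    · exact hn hf
    · exact hcm (hce.trans hem)
    · have hmem : a ∈ c n := by simp [hce, hek]
      simp only [hck, mem_insert, mem_singleton, had, or_false] at hmem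
      exact ha (hmem ▸ hp)
    · have hmem : a ∈ c n := by simp [hce, hek']
      simp only [hck', mem_insert, mem_singleton, had', or_false] at hmem
      exact ha (hmem ▸ hp)
    · exact hn (hce.trans hen)
  obtain ⟨X, hX, hce⟩ := S.isMaxTour.exists_cut_of_forall_not_lost S.card_eq_three he
    ⟨p, left_mem_support hck, left_mem_support hef⟩ hf (by simp [hef]) hlost
  exact ⟨X, isTwoCut_of_quadrilateral hef hem hek hek' hout hf hck hX hce⟩

theorem eq_of_isBypassed (S : IsStuck t c f) (hp : p ∈ t f) (hd : d ∉ t f) (hd' : d' ∉ t f)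
    (ha : a ∉ t f) (h : IsBypassed t c p d a) (h' : IsBypassed t c p d' a) (hv : v ∈ t f)
    (hvd : ¬ IsForced t c v d) (hpd : IsForced t c p d) : d = d' := by
  by_contra hdd
  have hvp : v ≠ p := by grind
  obtain ⟨m, hm⟩ := not_isForced_iff.1 hvd
  have hforced := fun v => S.isForced_of_isBypassed (v := v) hp hd ha h
  obtain ⟨-, had, k, htk, hck⟩ := h
  obtain ⟨-, had', k', htk', hck'⟩ := h'
  obtain ⟨X, hX, hav, hdv⟩ := S.exists_twoCut_of_isBypassed hp hd hd' hdd ha had had' htk hck htk'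
    hck' hv hvp hm
  obtain ⟨w, hwp, hwv, htf⟩ := exists_eq_insert_pair (S.card_eq_three f) hp hv hvp.symm
  have hw : w ∈ t f := by simp [htf]
  have hwk : w ∉ t k := by rw [htk]; grind
  have hmf : m ≠ f := by rintro rfl; exact hd hm.2.1
  have hwm : ∀ x ∉ t f, w ∈ t m → c m ≠ {w, x} := by
    intro x hx hwm hcm
    have hvw : c m = {v, w} := S.eq_pair hv hw hwv.symm hmf hm.1 hwm
    have hxm : x ∈ c m := by simp [hcm]
    grind
  have hside : ∀ x ∉ t f, IsForced t c w x → (w ∈ X ↔ x ∈ X) := by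
    intro x hx hwx
    obtain ⟨n, hwn, hxn⟩ := S.cover w x (by grind)
    have hcn := hwx.eq_pair hwn hxn
    refine hX.mem_iff_of_ne ?_ ?_ hcn
    · rintro rfl; exact hwk hwn
    · rintro rfl; exact hwm x hx hwn hcn
  have hwa := hside a ha (hforced w hw hwp)
  have hwd : ¬ IsForced t c w d := fun h => hdv (by rw [← hside d hd h, hwa, hav])
  obtain ⟨m', hm'⟩ := not_isForced_iff.1 hwd
  obtain rfl := S.isDetour_unique hv hw hwv.symm hd hm hm'
  exact hX.symm.not_mem_iff (S.eq_pair hv hw hwv.symm hmf hm.1 hm'.1) (by rw [hwa, hav])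

open Classical in
theorem two_mul_card_isDeficient_le [Fintype V] (S : IsStuck t c f) :
    #{a | IsDeficient t c f a} * 2 ≤ #{z : V × V | IsPartlyForced t c f z.1 z.2} := by
  have key := card_mul_le_card_mul (fun (a : V) (z : V × V) => a = z.1) (m := 2) (n := 1)
    (s := {a | IsDeficient t c f a}) (t := {z : V × V | IsPartlyForced t c f z.1 z.2}) ?_ ?_
  · simpa using key
  · intro a ha
    obtain ⟨-, haf, p, hp, hpa, hforced⟩ := mem_filter.1 ha
    calc 2 = #({a} ×ˢ (t f).erase p) := by
          rw [card_product, card_singleton, card_erase_of_mem hp, S.card_eq_three]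
      _ ≤ _ := card_le_card ?_
    rintro ⟨x, v⟩ hz
    simp only [mem_product, mem_singleton, mem_erase] at hz
    obtain ⟨rfl, hvp, hv⟩ := hz
    exact mem_filter.2 ⟨mem_filter.2 ⟨mem_univ _, haf, hv, hforced v hv hvp, p, hp, hpa⟩, rfl⟩
  · intro z _
    exact card_le_one.2 fun a ha b hb => (mem_filter.1 ha).2.trans (mem_filter.1 hb).2.symm

open Classical in
theorem card_isPartlyForced_le [Fintype V] (S : IsStuck t c f) :
    #{z : V × V | IsPartlyForced t c f z.1 z.2} ≤ #{a | IsDeficient t c f a} := by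
  refine card_le_card_of_forall_subsingleton (fun z a => a ∉ t f ∧ IsBypassed t c z.2 z.1 a) ?_ ?_
  · rintro ⟨d, p⟩ hz
    obtain ⟨-, hd, hp, hpd, -⟩ := mem_filter.1 hz
    obtain ⟨a, ha, h⟩ := S.exists_isBypassed hp hd hpd
    exact ⟨a, mem_filter.2 ⟨mem_univ a, S.isDeficient_of_isBypassed hp hd ha h⟩, ha, h⟩
  · rintro a - ⟨d, p⟩ ⟨hz, ha, h⟩ ⟨d', p'⟩ ⟨hz', -, h'⟩
    obtain ⟨-, hd, hp, hpd, v, hv, hvd⟩ := mem_filter.1 hz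
    obtain ⟨-, hd', hp', -⟩ := mem_filter.1 hz'
    obtain rfl : p = p' := by
      by_contra hpp
      exact h'.not_isForced (S.isForced_of_isBypassed hp hd ha h hp' (Ne.symm hpp))
    exact congrArg (·, p) (S.eq_of_isBypassed hp hd hd' ha h h' hv hvd hpd)

theorem mem_skipped [Finite V] (S : IsStuck t c f) (d : V) : d ∈ t f := by
  classical
  have := Fintype.ofFinite V
  by_contra hd
  obtain ⟨p, hp, hpd⟩ := S.exists_isForced hd
  obtain ⟨a, ha, h⟩ := S.exists_isBypassed hp hd hpd
  have hpos : 0 < #{a | IsDeficient t c f a} :=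
    card_pos.2 ⟨a, mem_filter.2 ⟨mem_univ a, S.isDeficient_of_isBypassed hp hd ha h⟩⟩
  have := S.two_mul_card_isDeficient_le
  have := S.card_isPartlyForced_le
  omega

end IsStuck

end Bypass

section Existence

variable {V ι : Type*} [DecidableEq V] [Fintype ι] {t c : ι → Finset V} {f i : ι}

theorem IsStuck.subsingleton [Finite V] (S : IsStuck t c f) : Subsingleton ι := by
  refine subsingleton_of_forall_eq f fun i => by_contra fun hif => ?_
  have hti : t i = t f := eq_of_subset_of_card_le (fun x _ => S.mem_skipped x)
    (by rw [S.card_eq_three, S.card_eq_three])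
  obtain ⟨u, v, w, huv, huw, hvw, htf⟩ := Finset.card_eq_three.1 (S.card_eq_three f)
  have hcuv : c i = {u, v} := S.eq_pair (by simp [htf]) (by simp [htf]) huv hif
    (by simp [hti, htf]) (by simp [hti, htf])
  have hcuw : c i = {u, w} := S.eq_pair (by simp [htf]) (by simp [htf]) huw hif
    (by simp [hti, htf]) (by simp [hti, htf])
  have hw : w ∈ c i := by simp [hcuw]
  simp [hcuv, huw.symm, hvw.symm] at hw

theorem exists_tour_support_nonempty [Nontrivial ι] (ht : ∀ i, #(t i) = 3)
    (hcover : ∀ p q, p ≠ q → ∃ i, p ∈ t i ∧ q ∈ t i) :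
    ∃ c, IsTour t c ∧ (support c).Nonempty := by
  obtain ⟨f, i, hfi⟩ := exists_pair_ne ι
  obtain ⟨p, q, r, hpq, -, -, htf⟩ := Finset.card_eq_three.1 (ht f)
  have hp : p ∈ t f := by simp [htf]
  have hq : q ∈ t f := by simp [htf]
  have digon : ∀ j, f ≠ j → p ∈ t j → q ∈ t j → ∃ c, IsTour t c ∧ (support c).Nonempty := by
    intro j hfj hpj hqj
    obtain ⟨c, hc, hcf, -⟩ := exists_digon_tour hfj hpq hp hq hpj hqj
    exact ⟨c, hc, p, left_mem_support hcf⟩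
  by_cases hall : ∀ x, x ∈ t f
  · have hti : t i = t f := eq_of_subset_of_card_le (fun x _ => hall x) (by rw [ht, ht])
    exact digon i hfi (hti ▸ hp) (hti ▸ hq)
  · obtain ⟨x, hx⟩ := not_forall.1 hall
    obtain ⟨j, hqj, hxj⟩ := hcover q x (by grind)
    obtain ⟨k, hpk, hxk⟩ := hcover p x (by grind)
    have hfj : f ≠ j := by grind
    obtain rfl | hjk := eq_or_ne j k
    · exact digon j hfj hpk hqj
    · obtain ⟨c, hc, hcf, -⟩ := exists_triangle_tour (r := x) hfj (by grind) hjk hpq (by grind)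
        (by grind) hp hq hqj hxj hpk hxk
      exact ⟨c, hc, p, left_mem_support hcf⟩

theorem exists_tour_forall_ne_empty [Finite V] [Nontrivial ι] (ht : ∀ i, #(t i) = 3)
    (hcover : ∀ p q, p ≠ q → ∃ i, p ∈ t i ∧ q ∈ t i) :
    ∃ c, IsTour t c ∧ ∀ i, c i ≠ ∅ := by
  obtain ⟨c₀, hc₀, v, i, hi⟩ := exists_tour_support_nonempty ht hcover
  obtain ⟨c, hc, hmax⟩ := Set.exists_max_image {c | IsTour t c} numUsed (Set.toFinite _) ⟨c₀, hc₀⟩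
  refine ⟨c, hc, fun f hf => ?_⟩
  have hpos : 0 < numUsed c := calc
    0 < numUsed c₀ := card_pos.2 ⟨i, by simpa using ne_empty_of_mem hi⟩
    _ ≤ numUsed c := hmax c₀ hc₀
  obtain ⟨j, hj⟩ := card_pos.1 hpos
  obtain ⟨w, hw⟩ := nonempty_iff_ne_empty.2 (mem_filter.1 hj).2
  have S : IsStuck t c f := ⟨ht, hcover, ⟨hc, hmax⟩, hf, w, j, hw⟩
  exact not_subsingleton ι S.subsingleton

end Existence

section EulerTrail

variable {V ι : Type*} [DecidableEq V] [Fintype ι] {t c : ι → Finset V} {u w : V} {L : List ι}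
  {i : ι}

theorem IsEvenSelection.exists_eq_pair_of_mem (ht : ∀ i, #(t i) = 3) (hc : IsEvenSelection t c)
    (hu : u ∈ c i) : ∃ x, x ≠ u ∧ c i = {x, u} := by
  obtain h | ⟨p, q, hpq, h⟩ := hc.eq_empty_or_pair ht i
  · simp [h] at hu
  · obtain rfl | rfl : u = p ∨ u = q := by simpa [h] using hu
    · exact ⟨q, hpq.symm, h.trans (pair_comm u q)⟩
    · exact ⟨p, hpq, h⟩

theorem IsEvenSelection.exists_notMem_of_trail (hc : IsEvenSelection t c) (h : Trail c u w L)
    (hL : L.Nodup) (huw : u ≠ w) : ∃ i ∉ L, u ∈ c i := by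
  by_contra! hcon
  have heven := hc.even_degree u
  rw [card_filter_eq_countP hL fun i hu => by_contra fun hi => hcon i hi hu,
    h.even_countP_iff] at heven
  exact huw (heven.1 rfl)

theorem IsTour.exists_rotation (hc : IsTour t c) (hne : ∀ i, c i ≠ ∅) (h : Trail c u u L)
    (hi : i ∉ L) : ∃ j ∉ L, ∃ v ∈ c j, ∃ L', L'.Perm L ∧ Trail c v v L' := by
  by_contra! hcon
  let X : Set V := {v | ∃ L₁ L₂, L = L₁ ++ L₂ ∧ Trail c u v L₁ ∧ Trail c v u L₂}
  have hout : ∀ j ∉ L, ∀ v ∈ c j, v ∉ X := by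
    rintro j hj v hv ⟨L₁, L₂, rfl, h₁, h₂⟩
    exact hcon j hj v hv _ List.perm_append_comm (h₂.append h₁)
  have hin : ∀ j ∈ L, ∀ v ∈ c j, v ∈ X := fun j hj v hv => h.exists_split_at hj hv
  obtain ⟨v, hv⟩ := nonempty_iff_ne_empty.2 (hne i)
  obtain rfl | hnil := eq_or_ne L []
  · exact hcon i hi v hv [] .rfl (.nil v)
  · obtain ⟨j, hj⟩ := List.exists_mem_of_ne_nil L hnil
    obtain ⟨x, hx⟩ := nonempty_iff_ne_empty.2 (hne j)
    refine hout i hi v hv (hc.mem_of_forall_not_crosses ?_ ⟨j, hx⟩ ⟨i, hv⟩ (hin j hj x hx))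
    rintro k ⟨p, hp, q, hq, hpX, hqX⟩
    by_cases hk : k ∈ L
    · exact hqX (hin k hk q hq)
    · exact hout k hk p hp hpX

theorem IsTour.exists_longer_trail (ht : ∀ i, #(t i) = 3) (hc : IsTour t c) (hne : ∀ i, c i ≠ ∅)
    (h : Trail c u w L) (hL : L.Nodup) (hex : u = w → ∃ i, i ∉ L) :
    ∃ u' w' L', Trail c u' w' L' ∧ L'.Nodup ∧ L'.length = L.length + 1 := by
  obtain rfl | huw := eq_or_ne u w
  · obtain ⟨i, hi⟩ := hex rfl
    obtain ⟨j, hj, v, hv, L', hperm, h'⟩ := hc.exists_rotation hne h hi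
    obtain ⟨x, hxv, hx⟩ := hc.exists_eq_pair_of_mem ht hv
    exact ⟨x, v, j :: L', .cons hx hxv h',
      List.nodup_cons.2 ⟨fun hj' => hj (hperm.mem_iff.1 hj'), hperm.nodup_iff.2 hL⟩,
      congrArg (· + 1) hperm.length_eq⟩
  · obtain ⟨i, hi, hu⟩ := hc.exists_notMem_of_trail h hL huw
    obtain ⟨x, hxu, hx⟩ := hc.exists_eq_pair_of_mem ht hu
    exact ⟨x, w, i :: L, .cons hx hxu h, List.nodup_cons.2 ⟨hi, hL⟩, rfl⟩

theorem IsTour.exists_euler_trail [Nonempty ι] (ht : ∀ i, #(t i) = 3) (hc : IsTour t c)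
    (hne : ∀ i, c i ≠ ∅) : ∃ u L, Trail c u u L ∧ L.Nodup ∧ ∀ i, i ∈ L := by
  by_contra! hcon
  have hlong : ∀ n, ∃ u w L, Trail c u w L ∧ L.Nodup ∧ L.length = n := by
    intro n
    induction n with
    | zero =>
      obtain ⟨v, -⟩ := nonempty_iff_ne_empty.2 (hne (Classical.arbitrary ι))
      exact ⟨v, v, [], .nil v, List.nodup_nil, rfl⟩
    | succ n ih =>
      obtain ⟨u, w, L, h, hL, rfl⟩ := ih
      refine hc.exists_longer_trail ht hne h hL ?_
      rintro rfl
      exact hcon u L h hL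
  obtain ⟨u, w, L, -, hL, hlen⟩ := hlong (Fintype.card ι + 1)
  have hle := hL.length_le_card
  omega

end EulerTrail

theorem exists_euler_trail_of_cover {V ι : Type*} [DecidableEq V] [Finite V] [Finite ι]
    [Nontrivial ι] {t : ι → Finset V} (ht : ∀ i, #(t i) = 3)
    (hcover : ∀ p q, p ≠ q → ∃ i, p ∈ t i ∧ q ∈ t i) :
    ∃ c u L, (∀ i, c i ⊆ t i) ∧ Trail c u u L ∧ L.Nodup ∧ ∀ i, i ∈ L := by
  have := Fintype.ofFinite ι
  obtain ⟨c, hc, hne⟩ := exists_tour_forall_ne_empty ht hcover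
  obtain ⟨u, L, h⟩ := hc.exists_euler_trail ht hne
  exact ⟨c, u, L, hc.subset, h⟩


section Hypergraph

theorem Trail.exists_walk {V ι : Type*} [DecidableEq V] {c : ι → Finset V} {u w : V} {L : List ι}
    (h : Trail c u w L) :
    ∃ v : Fin (L.length + 1) → V, v 0 = u ∧ v (Fin.last _) = w ∧
      ∀ i : Fin L.length, v i.castSucc ≠ v i.succ ∧
        v i.castSucc ∈ c (L.get i) ∧ v i.succ ∈ c (L.get i) := by
  induction h with
  | nil u => exact ⟨fun _ => u, rfl, rfl, fun i => i.elim0⟩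
  | @cons u x w j L hj hux _ ih =>
    obtain ⟨v, rfl, hlast, hstep⟩ := ih
    refine ⟨Fin.cons u v, rfl, hlast, Fin.cases ?_ hstep⟩
    change u ≠ v 0 ∧ u ∈ c j ∧ v 0 ∈ c j
    simp [hj, hux]

theorem Trail.isEulerian {V : Type} {W ι : Type*} [DecidableEq W] [Fintype ι] {t : ι → Finset V}
    {c : ι → Finset W} {u : W} {L : List ι} (h : Trail c u u L) (hL : L.Nodup)
    (hmem : ∀ i, i ∈ L) (g : W ↪ V) (hg : ∀ i, ∀ x ∈ c i, g x ∈ t i) :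
    IsEulerian (univ.val.map t) := by
  obtain ⟨v, hfirst, hlast, hstep⟩ := h.exists_walk
  refine ⟨L.length, g ∘ v, t ∘ L.get, ⟨congrArg g (hfirst.trans hlast.symm), fun i => ?_⟩, ?_⟩
  · obtain ⟨hne, hl, hr⟩ := hstep i
    exact ⟨g.injective.ne hne, hg _ _ hl, hg _ _ hr⟩
  · have huniv : (univ : Finset ι).val = L := by
      refine (Multiset.Nodup.ext univ.nodup (Multiset.coe_nodup.2 hL)).2 fun i => ?_
      simp [hmem i]
    rw [walkEdges, ← List.map_ofFn, List.ofFn_get, huniv, Multiset.map_coe]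

-- Passing to the link of a set `Z` of `k - 3` vertices of an edge; edges that do not contain `Z`
-- are shrunk to three vertices arbitrarily.
theorem exists_three_cover {V ι : Type*} [Nonempty ι] {t : ι → Finset V} {k : ℕ}
    (hk : 3 ≤ k) (ht : ∀ i, #(t i) = k) (hcover : ∀ s : Finset V, #s = k - 1 → ∃ i, s ⊆ t i) :
    ∃ (Z : Finset V) (s : ι → Finset {x // x ∉ Z}), (∀ i, #(s i) = 3) ∧
      (∀ i, ∀ x ∈ s i, x.1 ∈ t i) ∧ ∀ p q, p ≠ q → ∃ i, p ∈ s i ∧ q ∈ s i := by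
  classical
  obtain ⟨Z, -, hZ⟩ := exists_subset_card_eq (s := t (Classical.arbitrary ι)) (n := k - 3)
    (by rw [ht]; omega)
  have hcard : ∀ i, #((t i).subtype (· ∉ Z)) = #(t i \ Z) := by
    intro i
    rw [card_subtype, filter_notMem_eq_sdiff]
  have hthree : ∀ i, ∃ s ⊆ (t i).subtype (· ∉ Z), #s = 3 := by
    intro i
    have hle := le_card_sdiff Z (t i)
    exact exists_subset_card_eq (by rw [hcard]; grind)
  choose s hsub hs using hthree
  refine ⟨Z, s, hs, fun i x hx => mem_subtype.1 (hsub i hx), fun p q hpq => ?_⟩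
  have hpqZ : #(insert p.1 (insert q.1 Z)) = k - 1 := by
    have hp : p.1 ∉ insert q.1 Z := by
      simp [Subtype.coe_ne_coe.2 hpq, p.2]
    rw [card_insert_of_notMem hp, card_insert_of_notMem q.2, hZ]
    omega
  obtain ⟨i, hi⟩ := hcover _ hpqZ
  have hZi : Z ⊆ t i := fun z hz => hi (by simp [hz])
  have hsi : s i = (t i).subtype (· ∉ Z) := by
    refine eq_of_subset_of_card_le (hsub i) ?_
    rw [hcard, hs, card_sdiff_of_subset hZi, ht, hZ]
    omega
  exact ⟨i, hsi ▸ mem_subtype.2 (hi (by simp)), hsi ▸ mem_subtype.2 (hi (by simp))⟩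

variable {V : Type} {E : Multiset (Finset V)}

theorem IsEulerian.two_le_card (h : IsEulerian E) (hE : E ≠ 0) : 2 ≤ Multiset.card E := by
  obtain ⟨n, v, e, ⟨hclosed, hstep⟩, rfl⟩ := h
  rw [← Multiset.card_pos] at hE
  simp only [walkEdges, Multiset.coe_card, List.length_ofFn] at hE ⊢
  obtain rfl | hn : n = 1 ∨ 2 ≤ n := by omega
  · exact absurd hclosed (hstep 0).1
  · exact hn

theorem IsCoveringHypergraph.isEulerian [Finite V] [DecidableEq V] {k : ℕ} (hk : 3 ≤ k)
    (hH : IsCoveringHypergraph E (k - 1) k) (hE : 2 ≤ Multiset.card E) : IsEulerian E := by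
  obtain ⟨-, hcard, hcover⟩ := hH
  have : Nontrivial E := Fintype.one_lt_card_iff_nontrivial.1 (by rwa [Multiset.card_coe])
  have hcoverE : ∀ s : Finset V, #s = k - 1 → ∃ e : E, s ⊆ e := by
    intro s hs
    obtain ⟨e, he, hse⟩ := hcover s hs
    exact ⟨⟨e, 0, Multiset.count_pos.2 he⟩, hse⟩
  obtain ⟨Z, s, hs, hst, hpair⟩ := exists_three_cover hk
    (t := fun e : E => e.1) (fun e => hcard e Multiset.coe_mem) hcoverE
  obtain ⟨c, u, L, hcs, hc, hL, hmem⟩ := exists_euler_trail_of_cover hs hpair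
  rw [← E.map_univ_coe]
  exact hc.isEulerian hL hmem (.subtype _) fun e x hx => hst e x (hcs e hx)

end Hypergraph

/-- Let `k ≥ 3` and let `H` be a covering `k`-hypergraph, i.e. a `(k-1)`-covering
`k`-hypergraph.  Then `H` is eulerian if and only if `H` has at least two edges. -/
theorem coveringKHypergraph_eulerian_iff_two_le_card {V : Type} [Fintype V] [DecidableEq V]
    (k : ℕ) (hk : 3 ≤ k) (E : Multiset (Finset V))
    (hH : IsCoveringHypergraph E (k - 1) k) :
    IsEulerian E ↔ 2 ≤ Multiset.card E :=
  ⟨fun h => h.two_le_card hH.1, hH.isEulerian hk⟩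
end
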